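/- Let μ be an ergodic translation-invariant Gibbs measure for the 1-2 model on the hexagonal lattice ℍ (with any weights a, b, c > 0), and let 𝒩_{001}(ω) denote the number of infinite {001}-clusters of ω. Then μ({ω : 𝒩_{001}(ω) = ∞}) = 0. -/

import Mathlib

open MeasureTheory

/-- Vertices of the hexagonal lattice: `(x, y, t)` with `t = true` the "upper" vertex. -/
abbrev HexV : Type := ℤ × ℤ × Bool

/-- Edges of the hexagonal lattice: `(x, y, k)` with `k = 0` the a-type (horizontal) edge
joining `(x,y,1)` to `(x,y,0)`, `k = 1` the b-type edge joining `(x,y,1)` to `(x+1,y,0)`,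
`k = 2` the c-type edge joining `(x,y,1)` to `(x,y+1,0)`. -/
abbrev HexE : Type := ℤ × ℤ × Fin 3

/-- A configuration assigns present/absent to each edge. -/
abbrev Config : Type := HexE → Bool

def end1 (e : HexE) : HexV := (e.1, e.2.1, true)

def end2 (e : HexE) : HexV :=
  if e.2.2 = 0 then (e.1, e.2.1, false)
  else if e.2.2 = 1 then (e.1 + 1, e.2.1, false)
  else (e.1, e.2.1 + 1, false)

/-- The edges incident to a vertex, indexed so that index `0` is the a-type (horizontal)
edge, index `1` the b-type edge, index `2` the c-type edge. -/
def edgesAt (v : HexV) : Fin 3 → HexE := fun i =>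
  if v.2.2 then (v.1, v.2.1, i)
  else if i = 0 then (v.1, v.2.1, 0)
  else if i = 1 then (v.1 - 1, v.2.1, 1)
  else (v.1, v.2.1 - 1, 2)

/-- Local configuration of `ω` at `v`: digit `0` (rightmost) is the a-type edge,
digit `1` the b-type edge, digit `2` (leftmost) the c-type edge. -/
def localConf (ω : Config) (v : HexV) : Fin 3 → Bool := fun i => ω (edgesAt v i)

/-- A 1-2 model configuration: every vertex is incident to one or two present edges. -/
def IsConfig (ω : Config) : Prop :=
  ∀ v : HexV,
    1 ≤ (Finset.univ.filter fun i : Fin 3 => localConf ω v i = true).card ∧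
    (Finset.univ.filter fun i : Fin 3 => localConf ω v i = true).card ≤ 2

/-- The local configuration type `{001}` : only the a-type (horizontal) edge is present. -/
def conf001 : Fin 3 → Bool := ![true, false, false]

/-- The six admissible local configuration types `{001},…,{110}`. -/
def validConf (τ : Fin 3 → Bool) : Prop :=
  τ ≠ ![false, false, false] ∧ τ ≠ ![true, true, true]

/-- Vertex weight: `w(001)=w(110)=a`, `w(010)=w(101)=b`, `w(011)=w(100)=c`. -/
def weight (a b c : ℝ) (f : Fin 3 → Bool) : ℝ :=
  match f 2, f 1, f 0 with
  | false, false, true  => a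
  | true,  true,  false => a
  | false, true,  false => b
  | true,  false, true  => b
  | false, true,  true  => c
  | true,  false, false => c
  | false, false, false => 0
  | true,  true,  true  => 0

/-- Adjacency in the hexagonal lattice. -/
def HexAdj (v w : HexV) : Prop :=
  v ≠ w ∧ ∃ e : HexE, (v = end1 e ∨ v = end2 e) ∧ (w = end1 e ∨ w = end2 e)

/-- Adjacency restricted to a vertex set `S`. -/
def adjIn (S : Set HexV) (v w : HexV) : Prop := HexAdj v w ∧ v ∈ S ∧ w ∈ S

/-- The connected component of `v` in the subgraph induced on `S`. -/
def compOf (S : Set HexV) (v : HexV) : Set HexV := {w | Relation.ReflTransGen (adjIn S) v w}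

/-- `C` is a connected component of the subgraph induced on `S`. -/
def IsCompOf (S : Set HexV) (C : Set HexV) : Prop := ∃ v ∈ S, C = compOf S v

/-- Vertices whose local configuration equals `τ`. -/
def confSet (ω : Config) (τ : Fin 3 → Bool) : Set HexV := {v | localConf ω v = τ}

/-- A `τ`-cluster of `ω`. -/
def IsCluster (ω : Config) (τ : Fin 3 → Bool) (C : Set HexV) : Prop :=
  IsCompOf (confSet ω τ) C

/-- The number of infinite `τ`-clusters of `ω`, as an extended natural number. -/
noncomputable def numInfClusters (ω : Config) (τ : Fin 3 → Bool) : ℕ∞ :=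
  {C : Set HexV | IsCluster ω τ C ∧ C.Infinite}.encard

def endsFinset (e : HexE) : Finset HexV := {end1 e, end2 e}

/-- Vertices incident to an edge of `F`. -/
def verts (F : Finset HexE) : Finset HexV := F.biUnion endsFinset

/-- Edges sharing an endpoint with an edge of `F`. -/
def edgeNbhd (F : Finset HexE) : Set HexE :=
  {e' | ∃ e ∈ F,
    end1 e = end1 e' ∨ end1 e = end2 e' ∨ end2 e = end1 e' ∨ end2 e = end2 e'}

/-- Cylinder event: configurations agreeing with `σ` on `S`. -/
def cyl (S : Set HexE) (σ : Config) : Set Config := {ω | ∀ e ∈ S, ω e = σ e}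

/-- A Gibbs measure for the 1-2 model with weights `a`, `b`, `c`. -/
def IsGibbs (a b c : ℝ) (μ : Measure Config) : Prop :=
  IsProbabilityMeasure μ ∧ μ {ω | IsConfig ω} = 1 ∧
  ∀ F : Finset HexE, ∀ σ τ : Config, IsConfig σ → IsConfig τ →
    (∀ e ∉ F, σ e = τ e) →
    μ (cyl (↑F ∪ edgeNbhd F) σ) *
        ENNReal.ofReal (∏ v ∈ verts F, weight a b c (localConf τ v)) =
      μ (cyl (↑F ∪ edgeNbhd F) τ) *
        ENNReal.ofReal (∏ v ∈ verts F, weight a b c (localConf σ v))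

/-- Translation of edges by `g ∈ ℤ²`. -/
def shiftE (g : ℤ × ℤ) (e : HexE) : HexE := (e.1 + g.1, e.2.1 + g.2, e.2.2)

/-- Induced translation action on configurations. -/
def shiftConfig (g : ℤ × ℤ) (ω : Config) : Config := fun e => ω (shiftE g e)

/-- Translation invariance of a measure on configurations. -/
def TransInvariant (μ : Measure Config) : Prop :=
  ∀ g : ℤ × ℤ, μ.map (shiftConfig g) = μ

/-- Ergodicity: every translation-invariant measurable event has measure `0` or `1`. -/
def IsErgodicTI (μ : Measure Config) : Prop :=
  ∀ A : Set Config, MeasurableSet A → (∀ g, shiftConfig g ⁻¹' A = A) → μ A = 0 ∨ μ A = 1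

/-- The box `B_n(i,j)`. -/
def box (n : ℕ) (i j : ℤ) : Set HexV :=
  {v | |v.1 - i| ≤ (n : ℤ) ∧ |v.2.1 - j| ≤ (n : ℤ)}

/-- Vertices outside `B` adjacent to a vertex of `B`. -/
def outerBoundary (B : Set HexV) : Set HexV := {v | v ∉ B ∧ ∃ w ∈ B, HexAdj v w}

/-- `B_N(i,j)` is an encounter box for `ω` with respect to the infinite `{001}`-cluster `C`. -/
def IsEncounterBoxWrt (ω : Config) (N : ℕ) (i j : ℤ) (C : Set HexV) : Prop :=
  IsCluster ω conf001 C ∧ C.Infinite ∧ box N i j ⊆ C ∧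
  (∀ D, IsCompOf (C \ box (N + 2) i j) D → D.Infinite) ∧
  {D : Set HexV | IsCompOf (C \ box (N + 2) i j) D ∧ D.Infinite}.encard = 3

/-- `B_N(i,j)` is an encounter box for `ω`. -/
def IsEncounterBox (ω : Config) (N : ℕ) (i j : ℤ) : Prop :=
  ∃ C : Set HexV, IsEncounterBoxWrt ω N i j C

/-- A 3-partition of `Y`: an unordered triple of pairwise disjoint nonempty sets with union `Y`. -/
def IsThreePartition {α : Type*} (Y : Set α) (P : Set (Set α)) : Prop :=
  ∃ P₁ P₂ P₃ : Set α, P = {P₁, P₂, P₃} ∧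
    P₁.Nonempty ∧ P₂.Nonempty ∧ P₃.Nonempty ∧
    Disjoint P₁ P₂ ∧ Disjoint P₁ P₃ ∧ Disjoint P₂ P₃ ∧
    P₁ ∪ P₂ ∪ P₃ = Y

/-- Two 3-partitions are compatible if their parts can be ordered so that `Q₂ ∪ Q₃ ⊆ P₁`. -/
def CompatiblePartitions {α : Type*} (P Q : Set (Set α)) : Prop :=
  ∃ P₁ ∈ P, ∃ Q₁ ∈ Q, ∀ R ∈ Q, R ≠ Q₁ → R ⊆ P₁


theorem tf_count {ι Y : Type*} (D : ι → Fin 3 → Set Y) (n : ℕ) :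
    ∀ (I : Finset ι) (Ys : Finset Y), I.card = n →
    (∀ i ∈ I, ∀ a b, a ≠ b → Disjoint (D i a) (D i b)) →
    (∀ i ∈ I, ∀ a, ∃ y ∈ Ys, y ∈ D i a) →
    (∀ i ∈ I, ∀ j ∈ I, i ≠ j → (∀ a b, Disjoint (D i a) (D j b)) ∨
      ∃ a b, ∀ a', a' ≠ a → D i a' ⊆ D j b) → I.card ≤ Ys.card := by
  classical
  induction n with
  | zero => intro I Ys h _ _ _; omega
  | succ n ih =>
    intro I Ys hI hd hne hc
    have hInE : (I ×ˢ (Finset.univ : Finset (Fin 3))).Nonempty := by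
      have : I.Nonempty := Finset.card_pos.1 (by omega)
      exact this.product Finset.univ_nonempty
    obtain ⟨⟨i, a⟩, hia, hmax⟩ := Finset.exists_max_image _
      (fun p : ι × Fin 3 => (Ys.filter (fun y => y ∈ D p.1 p.2)).card) hInE
    have hi : i ∈ I := (Finset.mem_product.1 hia).1
    obtain ⟨x, x', hxa, hxa', hxx⟩ : ∃ x x' : Fin 3, x ≠ a ∧ x' ≠ a ∧ x ≠ x' := by
      clear hia hmax; revert a; decide
    -- key
    have key : ∀ j ∈ I, j ≠ i → ∀ b, Disjoint (D i x) (D j b) ∨ (D i x' ⊆ D j b) := by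
      intro j hj hji b
      rcases hc i hi j hj (Ne.symm hji) with h | ⟨a0, b0, h⟩
      · exact Or.inl (h _ _)
      · have ha0 : a0 = a := by
          by_contra hne0
          have h1 := h a (Ne.symm hne0)
          obtain ⟨z, hz0, hza⟩ : ∃ z : Fin 3, z ≠ a0 ∧ z ≠ a := by
            clear h1 h hne0 hxa hxa' hmax hia; revert a0 a; decide
          have h2 := h z hz0
          have hm := hmax (j, b0) (by simp [hj])
          obtain ⟨y, hy, hyz⟩ := hne i hi z
          have : (Ys.filter (fun y => y ∈ D i a)) ⊂ (Ys.filter (fun y => y ∈ D j b0)) := by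
            rw [Finset.ssubset_iff_of_subset]
            · refine ⟨y, by simp [hy, h2 hyz], ?_⟩
              simp only [Finset.mem_filter, not_and]
              intro _ hya
              exact Set.disjoint_left.1 (hd i hi z a hza) hyz hya
            · intro y; simp only [Finset.mem_filter]; exact fun hh => ⟨hh.1, h1 hh.2⟩
          have := Finset.card_lt_card this
          simp only at hm
          omega
        subst ha0
        by_cases hb : b = b0
        · subst hb; exact Or.inr (h x' hxa')
        · left
          exact (hd j hj b0 b (Ne.symm hb)).mono_left (h x hxa)
    have hdx := hd i hi x x' hxx
    have := ih (I.erase i) (Ys.filter (fun y => y ∉ D i x)) (by rw [Finset.card_erase_of_mem hi]; omega)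
      (fun j hj => hd j (Finset.mem_of_mem_erase hj))
      (by
        intro j hj b
        have hj' := Finset.mem_erase.1 hj
        rcases key j hj'.2 hj'.1 b with h | h
        · obtain ⟨y, hy, hyb⟩ := hne j hj'.2 b
          exact ⟨y, by simpa [hy] using Set.disjoint_right.1 h hyb, hyb⟩
        · obtain ⟨y, hy, hyb⟩ := hne i hi x'
          exact ⟨y, by simpa [hy] using Set.disjoint_right.1 hdx hyb, h hyb⟩)
      (fun j hj l hl => hc j (Finset.mem_of_mem_erase hj) l (Finset.mem_of_mem_erase hl))
    rw [Finset.card_erase_of_mem hi] at this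
    have h2 : (Ys.filter (fun y => y ∉ D i x)).card < Ys.card := by
      apply Finset.card_lt_card
      obtain ⟨y, hy, hyb⟩ := hne i hi x
      rw [Finset.ssubset_iff_of_subset (Finset.filter_subset _ _)]
      exact ⟨y, hy, by simp [hyb]⟩
    omega

theorem rtg_exit {α : Type*} {r : α → α → Prop} (P : α → Prop) {a b : α}
    (h : Relation.ReflTransGen r a b) (ha : P a) (hb : ¬ P b) :
    ∃ x y, Relation.ReflTransGen (fun x y => r x y ∧ P x ∧ P y) a x ∧ P x ∧ r x y ∧ ¬ P y := by
  induction h using Relation.ReflTransGen.head_induction_on with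
  | refl => exact absurd ha hb
  | head h1 h0 ih =>
    rename_i a c
    by_cases hc : P c
    · obtain ⟨x, y, h2, h3⟩ := ih hc
      exact ⟨x, y, Relation.ReflTransGen.head ⟨h1, ha, hc⟩ h2, h3⟩
    · exact ⟨a, c, Relation.ReflTransGen.refl, ha, h1, hc⟩

abbrev Conn (S : Set HexV) : HexV → HexV → Prop := Relation.ReflTransGen (adjIn S)

theorem HexAdj.symm' {v w : HexV} (h : HexAdj v w) : HexAdj w v := by
  obtain ⟨h1, e, h2, h3⟩ := h; exact ⟨h1.symm, e, h3, h2⟩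

theorem adjIn_symm {S : Set HexV} {v w : HexV} (h : adjIn S v w) : adjIn S w v :=
  ⟨h.1.symm', h.2.2, h.2.1⟩

theorem Conn.symm {S : Set HexV} {v w : HexV} (h : Conn S v w) : Conn S w v := by
  have : Std.Symm (adjIn S) := ⟨fun _ _ h => adjIn_symm h⟩
  exact Std.Symm.symm _ _ h

theorem Conn.mono {S T : Set HexV} (hST : S ⊆ T) {v w : HexV} (h : Conn S v w) : Conn T v w :=
  Relation.ReflTransGen.mono (fun _ _ h => ⟨h.1, hST h.2.1, hST h.2.2⟩) _ _ h

theorem Conn.mem {S : Set HexV} {v w : HexV} (h : Conn S v w) (hv : v ∈ S) : w ∈ S := by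
  rcases Relation.ReflTransGen.cases_tail h with h | ⟨_, _, h⟩
  · exact h ▸ hv
  · exact h.2.2

theorem Conn.single {S : Set HexV} {v w : HexV} (h : HexAdj v w) (hv : v ∈ S) (hw : w ∈ S) :
    Conn S v w := Relation.ReflTransGen.single ⟨h, hv, hw⟩

def TrifWit (S W : Set HexV) (u : Fin 3 → HexV) : Prop :=
  (∀ k, u k ∈ S \ W ∧ (∃ r ∈ W ∩ S, HexAdj (u k) r) ∧ (compOf (S \ W) (u k)).Infinite) ∧
    ∀ k l, k ≠ l → ¬ Conn (S \ W) (u k) (u l)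

def Trif (S W : Set HexV) : Prop :=
  (∀ u ∈ W ∩ S, ∀ v ∈ W ∩ S, Conn (W ∩ S) u v) ∧ ∃ u : Fin 3 → HexV, TrifWit S W u

open Classical in
noncomputable def lab (S W : Set HexV) (u : Fin 3 → HexV) (w : HexV) : Fin 3 :=
  if Conn (S \ W) (u 0) w then 0 else if Conn (S \ W) (u 1) w then 1 else 2

theorem lab_eq {S W : Set HexV} {u : Fin 3 → HexV} {v w : HexV} (h : Conn (S \ W) v w) :
    lab S W u v = lab S W u w := by
  have : ∀ k, Conn (S \ W) (u k) v ↔ Conn (S \ W) (u k) w := fun k =>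
    ⟨fun h1 => h1.trans h, fun h1 => h1.trans (Conn.symm h)⟩
  have h0 := this 0
  have h1 := this 1
  unfold lab
  split_ifs <;> first | rfl | (exfalso; tauto)

theorem lab_u {S W : Set HexV} {u : Fin 3 → HexV} (h : TrifWit S W u) (a : Fin 3) :
    lab S W u (u a) = a := by
  have h10 := h.2 0 1 (by decide)
  have h20 := h.2 0 2 (by decide)
  have h21 := h.2 1 2 (by decide)
  have h0 : ∀ k, Conn (S \ W) (u k) (u k) := fun k => Relation.ReflTransGen.refl
  fin_cases a <;> simp [lab, h10, h20, h21, h0]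

def Br (S W : Set HexV) (u : Fin 3 → HexV) (a : Fin 3) : Set HexV :=
  {w | w ∈ S \ W ∧ Conn S (u 0) w ∧ lab S W u w = a}

theorem conn_u0 {S W : Set HexV} {u : Fin 3 → HexV}
    (hc : ∀ u ∈ W ∩ S, ∀ v ∈ W ∩ S, Conn (W ∩ S) u v) (h : TrifWit S W u) (a : Fin 3)
    {r : HexV} (hr : r ∈ W ∩ S) : Conn S (u a) r := by
  obtain ⟨h1, ⟨r1, hr1, h2⟩, _⟩ := h.1 a
  exact (Conn.single h2 h1.1 hr1.2).trans (Conn.mono Set.inter_subset_right (hc _ hr1 _ hr))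

theorem br_compat {S W₁ W₂ : Set HexV} (hW : Disjoint W₁ W₂) {u₁ u₂ : Fin 3 → HexV}
    (hc₁ : ∀ u ∈ W₁ ∩ S, ∀ v ∈ W₁ ∩ S, Conn (W₁ ∩ S) u v) (h₁ : TrifWit S W₁ u₁)
    (hc₂ : ∀ u ∈ W₂ ∩ S, ∀ v ∈ W₂ ∩ S, Conn (W₂ ∩ S) u v) (h₂ : TrifWit S W₂ u₂) :
    (∀ a b, Disjoint (Br S W₁ u₁ a) (Br S W₂ u₂ b)) ∨
      ∃ a b, ∀ a', a' ≠ a → Br S W₁ u₁ a' ⊆ Br S W₂ u₂ b := by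
  by_cases hC : Conn S (u₁ 0) (u₂ 0)
  · right
    obtain ⟨_, ⟨r₁, hr₁, _⟩, _⟩ := h₁.1 0
    obtain ⟨_, ⟨r₂, hr₂, _⟩, _⟩ := h₂.1 0
    have s12 : W₁ ∩ S ⊆ S \ W₂ := fun x hx => ⟨hx.2, Set.disjoint_left.1 hW hx.1⟩
    have s21 : W₂ ∩ S ⊆ S \ W₁ := fun x hx => ⟨hx.2, Set.disjoint_right.1 hW hx.1⟩
    refine ⟨lab S W₁ u₁ r₂, lab S W₂ u₂ r₁, fun a' ha' w hw => ?_⟩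
    obtain ⟨hwS, hwC, hwl⟩ := hw
    have hnot : ∀ y, Conn (S \ W₁) w y → y ∉ W₂ := by
      intro y hy hyW
      have hyS := (Conn.mem hy hwS).1
      have e1 := lab_eq (u := u₁) hy
      have e2 := lab_eq (u := u₁) (Conn.mono s21 (hc₂ _ hr₂ _ ⟨hyW, hyS⟩))
      exact ha' (by rw [← hwl, e1, e2])
    have hwr : Conn S w r₁ := (Conn.symm hwC).trans (conn_u0 hc₁ h₁ 0 hr₁)
    obtain ⟨x, y, hx1, hx2, hx3, hx4⟩ := rtg_exit (fun v => v ∉ W₁) hwr hwS.2 (not_not.2 hr₁.1)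
    have hx1' : Conn (S \ W₁) w x := by
      refine Relation.ReflTransGen.mono ?_ _ _ hx1
      intro p q h
      show adjIn (S \ W₁) p q
      exact ⟨h.1.1, And.intro h.1.2.1 h.2.1, And.intro h.1.2.2 h.2.2⟩
    have hwx : Conn (S \ W₂) w x := by
      have : ∀ z, Conn (S \ W₁) w z → Conn (S \ W₂) w z := by
        intro z hz
        induction hz with
        | refl => exact Relation.ReflTransGen.refl
        | tail h3 h4 ih =>
          exact ih.trans (Conn.single h4.1 ⟨h4.2.1.1, hnot _ h3⟩
            ⟨h4.2.2.1, hnot _ (h3.tail h4)⟩)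
      exact this x hx1'
    have hyr : Conn (S \ W₂) x r₁ := by
      have hy1 : y ∈ W₁ ∩ S := ⟨not_not.1 hx4, hx3.2.2⟩
      exact (Conn.single (S := S \ W₂) hx3.1 ⟨hx3.2.1, hnot _ hx1'⟩ (s12 hy1)).trans
        (Conn.mono s12 (hc₁ _ hy1 _ hr₁))
    exact ⟨⟨hwS.1, hnot w Relation.ReflTransGen.refl⟩, (Conn.symm hC).trans hwC,
      lab_eq (hwx.trans hyr)⟩
  · left
    intro a b
    rw [Set.disjoint_left]
    rintro w ⟨_, h1, _⟩ ⟨_, h2, _⟩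
    exact hC (h1.trans (Conn.symm h2))

theorem hexAdj_iff (v w : HexV) : HexAdj v w ↔
    (v.2.2 = true ∧ w.2.2 = false ∧ ((w.1 = v.1 ∧ w.2.1 = v.2.1) ∨
      (w.1 = v.1 + 1 ∧ w.2.1 = v.2.1) ∨ (w.1 = v.1 ∧ w.2.1 = v.2.1 + 1))) ∨
    (w.2.2 = true ∧ v.2.2 = false ∧ ((v.1 = w.1 ∧ v.2.1 = w.2.1) ∨
      (v.1 = w.1 + 1 ∧ v.2.1 = w.2.1) ∨ (v.1 = w.1 ∧ v.2.1 = w.2.1 + 1))) := by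
  obtain ⟨x, y, t⟩ := v
  obtain ⟨x', y', t'⟩ := w
  constructor
  · rintro ⟨hne, ⟨e1, e2, k⟩, h1, h2⟩
    fin_cases k <;> simp [end1, end2] at h1 h2 ⊢ <;> rcases h1 with h1 | h1 <;>
      rcases h2 with h2 | h2 <;> obtain ⟨rfl, rfl, rfl⟩ := h1 <;> obtain ⟨rfl, rfl, rfl⟩ := h2 <;>
      simp at hne ⊢
  · simp only
    rintro (⟨rfl, rfl, h⟩ | ⟨rfl, rfl, h⟩) <;> rcases h with ⟨rfl, rfl⟩ | ⟨rfl, rfl⟩ | ⟨rfl, rfl⟩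
    · exact ⟨by simp, (_, _, 0), Or.inl rfl, Or.inr rfl⟩
    · exact ⟨by simp, (_, _, 1), Or.inl rfl, Or.inr rfl⟩
    · exact ⟨by simp, (_, _, 2), Or.inl rfl, Or.inr rfl⟩
    · exact ⟨by simp, (_, _, 0), Or.inr rfl, Or.inl rfl⟩
    · exact ⟨by simp, (_, _, 1), Or.inr rfl, Or.inl rfl⟩
    · exact ⟨by simp, (_, _, 2), Or.inr rfl, Or.inl rfl⟩

noncomputable def bx (n : ℕ) : Finset HexV :=
  Finset.Icc (-(n:ℤ)) n ×ˢ Finset.Icc (-(n:ℤ)) n ×ˢ Finset.univ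

theorem mem_bx {n : ℕ} {v : HexV} : v ∈ bx n ↔ (-(n:ℤ) ≤ v.1 ∧ v.1 ≤ n) ∧ -(n:ℤ) ≤ v.2.1 ∧ v.2.1 ≤ n := by
  simp [bx]

theorem card_ring (n : ℕ) : (bx (n+1) \ bx n).card = 16 * n + 16 := by
  have hs : bx n ⊆ bx (n+1) := by
    intro v; simp only [mem_bx]; push_cast; omega
  have hc : ∀ n : ℕ, (bx n).card = 2 * (2 * n + 1)^2 := by
    intro n
    have : ((n:ℤ) + 1 + n).toNat = 2 * n + 1 := by omega
    simp [bx, this]; ring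
  rw [Finset.card_sdiff_of_subset hs, hc, hc]
  have : 2 * (2 * (n+1) + 1)^2 = 16 * n + 16 + 2 * (2*n+1)^2 := by ring
  omega

theorem hit_ring {S : Set HexV} {u : HexV} {n : ℕ} (hu : u ∈ bx n) (hi : (compOf S u).Infinite) :
    ∃ y ∈ bx (n+1) \ bx n, Conn S u y := by
  obtain ⟨w, hw, hwn⟩ := hi.exists_notMem_finset (bx n)
  obtain ⟨x, y, h1, h2, h3, h4⟩ := rtg_exit (fun v => v ∈ bx n) hw hu hwn
  refine ⟨y, ?_, (Relation.ReflTransGen.mono (fun _ _ h => h.1) _ _ h1).tail h3⟩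
  have := (hexAdj_iff _ _).1 h3.1
  simp only [Finset.mem_sdiff]
  refine ⟨?_, h4⟩
  rw [mem_bx] at *
  push_cast
  omega

/-- Counting: few disjoint trifurcation windows in a box. -/
theorem trif_count {ι : Type*} (S : Set HexV) (I : Finset ι) (W : ι → Set HexV) (n : ℕ)
    (hdisj : ∀ i ∈ I, ∀ j ∈ I, i ≠ j → Disjoint (W i) (W j))
    (hbox : ∀ i ∈ I, ∀ v ∈ W i, v ∈ bx n) (hT : ∀ i ∈ I, Trif S (W i)) :
    I.card ≤ 16 * (n + 1) + 16 := by
  classical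
  rw [← card_ring]
  have hT' : ∀ i, ∃ u, i ∈ I → TrifWit S (W i) u := by
    intro i
    by_cases hi : i ∈ I
    · obtain ⟨_, u, hu⟩ := hT i hi; exact ⟨u, fun _ => hu⟩
    · exact ⟨fun _ => (0,0,true), fun h => absurd h hi⟩
  choose u hu using hT'
  refine tf_count (fun i => Br S (W i) (u i)) _ I _ rfl ?_ ?_ ?_
  · intro i _ a b hab
    rw [Set.disjoint_left]
    rintro w ⟨_, _, h1⟩ ⟨_, _, h2⟩
    exact hab (h1.symm.trans h2)
  · intro i hi a
    obtain ⟨h1, ⟨r, hr, h2⟩, h3⟩ := (hu i hi).1 a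
    have hb : u i a ∈ bx (n+1) := by
      have := hbox i hi r hr.1
      have h4 := (hexAdj_iff _ _).1 h2
      rw [mem_bx] at *; push_cast; omega
    obtain ⟨y, hy, hc⟩ := hit_ring hb h3
    refine ⟨y, hy, Conn.mem hc h1, ?_, ?_⟩
    · exact ((conn_u0 (hT i hi).1 (hu i hi) 0 hr).trans
        (Conn.symm (conn_u0 (hT i hi).1 (hu i hi) a hr))).trans (Conn.mono Set.sdiff_subset hc)
    · rw [← lab_eq hc, lab_u (hu i hi)]
  · intro i hi j hj hij
    exact br_compat (hdisj i hi j hj hij) (hT i hi).1 (hu i hi) (hT j hj).1 (hu j hj)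


theorem meas_conn {S : Config → Set HexV} (hS : ∀ v, Measurable fun ω => v ∈ S ω) (u v : HexV) :
    Measurable fun ω => Conn (S ω) u v := by
  let R : ℕ → HexV → Config → Prop := fun n => Nat.rec (fun w _ => u = w)
    (fun _ r w ω => ∃ x, r x ω ∧ adjIn (S ω) x w) n
  have hR : ∀ n w, Measurable (R n w) := by
    intro n
    induction n with
    | zero => intro w; exact measurable_const
    | succ n ih =>
      intro w
      refine Measurable.exists fun x => (ih x).and ?_
      exact (measurable_const (a := HexAdj x w)).and ((hS x).and (hS w))
  have : (fun ω => Conn (S ω) u v) = fun ω => ∃ n, R n v ω := by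
    funext ω
    refine propext ⟨fun h => ?_, ?_⟩
    · induction h with
      | refl => exact ⟨0, rfl⟩
      | tail _ h2 ih =>
        obtain ⟨n, hn⟩ := ih
        exact ⟨n + 1, _, hn, h2⟩
    · rintro ⟨n, hn⟩
      revert v
      induction n with
      | zero => intro v hn; cases hn; exact Relation.ReflTransGen.refl
      | succ n ih =>
        rintro v ⟨x, h1, h2⟩
        exact (ih x h1).tail h2
  rw [this]
  exact Measurable.exists fun n => hR n v

theorem meas_inf {S : Config → Set HexV} (hS : ∀ v, Measurable fun ω => v ∈ S ω) (u : HexV) :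
    Measurable fun ω => (compOf (S ω) u).Infinite := by
  have : (fun ω => (compOf (S ω) u).Infinite) =
      fun ω => ∀ F : Finset HexV, ∃ w, w ∉ F ∧ Conn (S ω) u w := by
    funext ω
    refine propext ⟨fun h F => ?_, fun h hf => ?_⟩
    · obtain ⟨w, h1, h2⟩ := h.exists_notMem_finset F
      exact ⟨w, h2, h1⟩
    · obtain ⟨w, h1, h2⟩ := h hf.toFinset
      exact h1 (hf.mem_toFinset.2 h2)
  rw [this]
  exact Measurable.forall fun F => Measurable.exists fun w =>
    (measurable_const (a := w ∉ F)).and (meas_conn hS u w)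

theorem meas_confSet (τ : Fin 3 → Bool) (v : HexV) : Measurable fun ω => v ∈ confSet ω τ := by
  have : (fun ω => v ∈ confSet ω τ) = fun ω => ∀ i, ω (edgesAt v i) = τ i := by
    funext ω; exact propext funext_iff
  rw [this]
  refine Measurable.forall fun i => ?_
  rw [← measurableSet_setOfPred]
  exact measurableSet_eq_fun (measurable_pi_apply _) measurable_const

theorem meas_trif (W : Set HexV) : Measurable fun ω => Trif (confSet ω conf001) W := by
  have hS := meas_confSet conf001
  have hSW : ∀ v, Measurable fun ω => v ∈ confSet ω conf001 \ W := fun v =>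
    (hS v).and (measurable_const (a := v ∉ W))
  have hWS : ∀ v, Measurable fun ω => v ∈ W ∩ confSet ω conf001 := fun v =>
    (measurable_const (a := v ∈ W)).and (hS v)
  unfold Trif TrifWit
  refine Measurable.and ?_ ?_
  · exact Measurable.forall fun u => (hWS u).imp <| Measurable.forall fun v => (hWS v).imp
      (meas_conn hWS u v)
  · refine Measurable.exists fun u => Measurable.and ?_ ?_
    · refine Measurable.forall fun k => (hSW _).and (Measurable.and ?_ (meas_inf hSW _))
      exact Measurable.exists fun r => (hWS r).and (measurable_const)
    · exact Measurable.forall fun k => Measurable.forall fun l => measurable_const.imp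
        (meas_conn hSW _ _).not

def shiftV (g : ℤ × ℤ) (v : HexV) : HexV := (v.1 + g.1, v.2.1 + g.2, v.2.2)

theorem shiftV_neg (g : ℤ × ℤ) (v : HexV) : shiftV (-g) (shiftV g v) = v := by
  simp [shiftV]

theorem shiftV_neg' (g : ℤ × ℤ) (v : HexV) : shiftV g (shiftV (-g) v) = v := by
  simp [shiftV]

theorem shiftV_adj (g : ℤ × ℤ) {v w : HexV} (h : HexAdj v w) : HexAdj (shiftV g v) (shiftV g w) := by
  rw [hexAdj_iff] at *
  simp only [shiftV]
  rcases h with ⟨h1, h2, h3⟩ | ⟨h1, h2, h3⟩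
  · exact Or.inl ⟨h1, h2, by omega⟩
  · exact Or.inr ⟨h1, h2, by omega⟩

theorem confSet_shift (g : ℤ × ℤ) (ω : Config) (τ : Fin 3 → Bool) :
    confSet (shiftConfig g ω) τ = shiftV g ⁻¹' confSet ω τ := by
  ext ⟨x, y, t⟩
  have : localConf (shiftConfig g ω) (x, y, t) = localConf ω (shiftV g (x, y, t)) := by
    funext i
    cases t <;> fin_cases i <;>
      simp [localConf, shiftConfig, edgesAt, shiftV, shiftE] <;> congr 2 <;> ring_nf
  simp [confSet, this]

theorem conn_shift (g : ℤ × ℤ) {S : Set HexV} {u v : HexV} (h : Conn (shiftV g ⁻¹' S) u v) :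
    Conn S (shiftV g u) (shiftV g v) :=
  Relation.ReflTransGen.lift (shiftV g) (fun _ _ h => ⟨shiftV_adj g h.1, h.2.1, h.2.2⟩) _ _ h

theorem conn_shift' (g : ℤ × ℤ) {S : Set HexV} {u v : HexV} (h : Conn S (shiftV g u) (shiftV g v)) :
    Conn (shiftV g ⁻¹' S) u v := by
  have : S = shiftV (-g) ⁻¹' (shiftV g ⁻¹' S) := by
    ext x; simp [shiftV_neg']
  rw [this] at h
  simpa [shiftV_neg] using conn_shift (-g) h

theorem trif_shift (g : ℤ × ℤ) {S W : Set HexV} (h : Trif (shiftV g ⁻¹' S) (shiftV g ⁻¹' W)) :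
    Trif S W := by
  obtain ⟨h1, u, h2, h3⟩ := h
  refine ⟨fun x hx y hy => ?_, fun k => shiftV g (u k), fun k => ⟨(h2 k).1, ?_, ?_⟩, ?_⟩
  · have := conn_shift (S := W ∩ S) g (h1 (shiftV (-g) x) (by simpa [shiftV_neg'] using hx)
      (shiftV (-g) y) (by simpa [shiftV_neg'] using hy))
    simpa [shiftV_neg'] using this
  · obtain ⟨_, ⟨r, hr, h5⟩, _⟩ := h2 k
    exact ⟨shiftV g r, hr, shiftV_adj g h5⟩
  · obtain ⟨_, _, h5⟩ := h2 k
    have hinj : Function.Injective (shiftV g) := Function.LeftInverse.injective (shiftV_neg g)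
    refine (h5.image hinj.injOn).mono ?_
    rintro _ ⟨w, hw, rfl⟩
    exact conn_shift (S := S \ W) g hw
  · intro k l hkl hc
    exact h3 k l hkl (conn_shift' (S := S \ W) g hc)

theorem meas_shift (g : ℤ × ℤ) : Measurable (shiftConfig g) :=
  measurable_pi_lambda _ fun _ => measurable_pi_apply _

theorem trif_null (μ : Measure Config) [IsProbabilityMeasure μ] (hTI : TransInvariant μ)
    (W : Set HexV) (m : ℕ) (hW : ∀ v ∈ W, v ∈ bx m) :
    μ {ω | Trif (confSet ω conf001) W} = 0 := by
  classical
  set T := {ω | Trif (confSet ω conf001) W} with hT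
  have hTm : MeasurableSet T := measurableSet_setOfPred.2 (meas_trif W)
  let g : ℕ × ℕ → ℤ × ℤ := fun p => ((2 * m + 1) * p.1, (2 * m + 1) * p.2)
  have hTi : ∀ p, μ (shiftConfig (g p) ⁻¹' T) = μ T := by
    intro p
    rw [← Measure.map_apply (meas_shift _) hTm, hTI]
  have main : ∀ L : ℕ, (L * L : ℕ) * μ T ≤ ((16 * ((m + (2 * m + 1) * L) + 1) + 16 : ℕ) : ENNReal) := by
    intro L
    let I := Finset.range L ×ˢ Finset.range L
    have e1 : ∑ p ∈ I, μ (shiftConfig (g p) ⁻¹' T) = (L * L : ℕ) * μ T := by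
      simp [hTi, I]
    rw [← e1]
    have e2 : ∑ p ∈ I, μ (shiftConfig (g p) ⁻¹' T) =
        ∫⁻ ω, ∑ p ∈ I, (shiftConfig (g p) ⁻¹' T).indicator 1 ω ∂μ := by
      rw [lintegral_finsetSum]
      · refine Finset.sum_congr rfl fun p _ => ?_
        rw [lintegral_indicator_one (meas_shift _ hTm)]
      · intro p _
        exact measurable_one.indicator (meas_shift _ hTm)
    rw [e2]
    calc _ ≤ ∫⁻ ω, ((16 * ((m + (2 * m + 1) * L) + 1) + 16 : ℕ) : ENNReal) ∂μ := by
          refine lintegral_mono fun ω => ?_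
          have : ∑ p ∈ I, (shiftConfig (g p) ⁻¹' T).indicator (1 : Config → ENNReal) ω =
              ((I.filter fun p => ω ∈ shiftConfig (g p) ⁻¹' T).card : ENNReal) := by
            rw [Finset.card_filter]
            push_cast
            refine Finset.sum_congr rfl fun p _ => ?_
            simp [Set.indicator]
          rw [this]
          refine Nat.cast_le.2 ?_
          refine trif_count (confSet ω conf001) _ (fun p => shiftV (-g p) ⁻¹' W) _ ?_ ?_ ?_
          · intro p hp q hq hpq
            rw [Set.disjoint_left]
            intro v h1 h2
            have h1 := mem_bx.1 (hW _ h1)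
            have h2 := mem_bx.1 (hW _ h2)
            simp only [shiftV, g, Prod.fst_neg, Prod.snd_neg] at h1 h2
            apply hpq
            have key : ∀ s t : ℕ, ∀ z : ℤ, -(m:ℤ) ≤ z + -((2 * m + 1) * s) → z + -((2 * m + 1) * s) ≤ (m:ℤ) →
                -(m:ℤ) ≤ z + -((2 * m + 1) * t) → z + -((2 * m + 1) * t) ≤ (m:ℤ) → s ≤ t := by
              intro s t z a1 a2 a3 a4
              by_contra hlt
              have : (t:ℤ) + 1 ≤ s := by omega
              nlinarith
            ext
            · exact le_antisymm (key _ _ _ h1.1.1 h1.1.2 h2.1.1 h2.1.2) (key _ _ _ h2.1.1 h2.1.2 h1.1.1 h1.1.2)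
            · exact le_antisymm (key _ _ _ h1.2.1 h1.2.2 h2.2.1 h2.2.2) (key _ _ _ h2.2.1 h2.2.2 h1.2.1 h1.2.2)
          · intro p hp v hv
            have h1 := mem_bx.1 (hW _ hv)
            have hp' := (Finset.mem_filter.1 hp).1
            simp only [I, Finset.mem_product, Finset.mem_range] at hp'
            simp only [shiftV, g, Prod.fst_neg, Prod.snd_neg] at h1
            rw [mem_bx]
            push_cast
            have key : ∀ s : ℕ, s < L → ∀ z : ℤ, -(m:ℤ) ≤ z + -((2 * m + 1) * s) → z + -((2 * m + 1) * s) ≤ (m:ℤ) →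
                -((m:ℤ) + (2 * m + 1) * L) ≤ z ∧ z ≤ (m:ℤ) + (2 * m + 1) * L := by
              intro s hs z a1 a2
              have : (s:ℤ) + 1 ≤ L := by omega
              constructor <;> nlinarith
            exact ⟨key _ hp'.1 _ h1.1.1 h1.1.2, key _ hp'.2 _ h1.2.1 h1.2.2⟩
          · intro p hp
            have h1 := (Finset.mem_filter.1 hp).2
            have h2 : Trif (confSet (shiftConfig (g p) ω) conf001) W := h1
            rw [confSet_shift] at h2
            apply trif_shift (g p)
            convert h2
            ext v; simp [shiftV_neg]
      _ = _ := by simp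
  by_contra hne
  have hfin : μ T ≠ ⊤ := measure_ne_top _ _
  have hpos : 0 < (μ T).toReal := ENNReal.toReal_pos hne hfin
  have mainR : ∀ L : ℕ, (L * L : ℝ) * (μ T).toReal ≤ 16 * ((m + (2 * m + 1) * L) + 1) + 16 := by
    intro L
    have := ENNReal.toReal_mono (ENNReal.natCast_ne_top _) (main L)
    rw [ENNReal.toReal_mul, ENNReal.toReal_natCast, ENNReal.toReal_natCast] at this
    push_cast at this
    exact this
  obtain ⟨L, hL⟩ := exists_nat_gt ((16 * ((m + (2 * m + 1)) + 1) + 16) / (μ T).toReal)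
  rw [div_lt_iff₀ hpos] at hL
  have h1 := mainR (L + 1)
  push_cast at h1
  have hL0 : (0:ℝ) ≤ L := Nat.cast_nonneg _
  have hm0 : (0:ℝ) ≤ m := Nat.cast_nonneg _
  have h2 : (L + 1 : ℝ) * ((L : ℝ) * (μ T).toReal) ≤ (L + 1) * (L + 1) * (μ T).toReal := by
    have := mul_nonneg (by positivity : (0:ℝ) ≤ L + 1) hpos.le
    nlinarith
  have h3 := mul_lt_mul_of_pos_left hL (by positivity : (0:ℝ) < L + 1)
  nlinarith [mul_nonneg hL0 hm0]


open Classical in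
noncomputable def splice (F : Finset HexE) (φ ω : Config) : Config := fun e => if e ∈ F then φ e else ω e

theorem splice_mem {F : Finset HexE} {φ ω : Config} {e : HexE} (h : e ∈ F) : splice F φ ω e = φ e := by
  simp [splice, h]

theorem splice_not {F : Finset HexE} {φ ω : Config} {e : HexE} (h : e ∉ F) : splice F φ ω e = ω e := by
  simp [splice, h]

theorem end_edgesAt (v : HexV) (i : Fin 3) : v = end1 (edgesAt v i) ∨ v = end2 (edgesAt v i) := by
  obtain ⟨x, y, t⟩ := v
  cases t <;> fin_cases i <;> simp [end1, end2, edgesAt]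

theorem edgesAt_end1 (e : HexE) : edgesAt (end1 e) e.2.2 = e := by
  simp [end1, edgesAt]

theorem edgesAt_end2 (e : HexE) : edgesAt (end2 e) e.2.2 = e := by
  obtain ⟨x, y, k⟩ := e
  fin_cases k <;> simp [end2, edgesAt]

theorem mem_verts {F : Finset HexE} {v : HexV} : v ∈ verts F ↔ ∃ e ∈ F, v = end1 e ∨ v = end2 e := by
  simp [verts, endsFinset]

theorem mem_verts_of {F : Finset HexE} {v : HexV} {i : Fin 3} (h : edgesAt v i ∈ F) : v ∈ verts F :=
  mem_verts.2 ⟨_, h, end_edgesAt v i⟩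

theorem edgesAt_mem_nbhd {F : Finset HexE} {v : HexV} (h : v ∈ verts F) (i : Fin 3) :
    edgesAt v i ∈ edgeNbhd F := by
  obtain ⟨e, he, h1⟩ := mem_verts.1 h
  refine ⟨e, he, ?_⟩
  rcases h1 with h1 | h1 <;> rcases end_edgesAt v i with h2 | h2 <;> rw [← h1, ← h2] <;> simp

theorem nbhd_sub {F : Finset HexE} {e : HexE} (h : e ∈ edgeNbhd F) :
    ∃ v ∈ verts F, ∃ i, edgesAt v i = e := by
  obtain ⟨e', he', h1⟩ := h
  rcases h1 with h | h | h | h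
  · exact ⟨end1 e, mem_verts.2 ⟨e', he', Or.inl h.symm⟩, _, edgesAt_end1 e⟩
  · exact ⟨end2 e, mem_verts.2 ⟨e', he', Or.inl h.symm⟩, _, edgesAt_end2 e⟩
  · exact ⟨end1 e, mem_verts.2 ⟨e', he', Or.inr h.symm⟩, _, edgesAt_end1 e⟩
  · exact ⟨end2 e, mem_verts.2 ⟨e', he', Or.inr h.symm⟩, _, edgesAt_end2 e⟩

theorem nbhd_finite (F : Finset HexE) : ((F : Set HexE) ∪ edgeNbhd F).Finite := by
  refine F.finite_toSet.union (Set.Finite.subset (Set.Finite.biUnion (verts F).finite_toSet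
    (fun v _ => Set.finite_range (edgesAt v))) ?_)
  intro e he
  obtain ⟨v, hv, i, hi⟩ := nbhd_sub he
  simp only [Set.mem_iUnion]
  exact ⟨v, hv, i, hi⟩

theorem nbhd_mono {F H : Finset HexE} (h : F ⊆ H) :
    ((F : Set HexE) ∪ edgeNbhd F) ⊆ ((H : Set HexE) ∪ edgeNbhd H) := by
  rintro e (he | ⟨e', he', h1⟩)
  · exact Or.inl (h he)
  · exact Or.inr ⟨e', h he', h1⟩

theorem cyl_meas (G : Set HexE) (σ : Config) : MeasurableSet (cyl G σ) := by
  have : cyl G σ = ⋂ e ∈ G, {ω | ω e = σ e} := by ext; simp [cyl]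
  rw [this]
  exact MeasurableSet.biInter (Set.to_countable _) fun e _ =>
    measurableSet_eq_fun (measurable_pi_apply _) measurable_const

theorem cyl_countable (G : Set HexE) (hG : G.Finite) (P : Config → Prop) :
    {s | ∃ σ, P σ ∧ s = cyl G σ}.Countable := by
  have := hG.to_subtype
  refine (Set.countable_range (fun p : G → Bool => {ω : Config | G.domRestrict ω = p})).mono ?_
  rintro s ⟨σ, _, rfl⟩
  refine ⟨G.domRestrict σ, ?_⟩
  ext ω
  exact ⟨fun h e he => congrFun h ⟨e, he⟩, fun h => funext fun e => h e.1 e.2⟩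

def cylSys (F : Finset HexE) : Set (Set Config) :=
  {s | ∃ H : Finset HexE, F ⊆ H ∧ ∃ ρ, s = cyl (↑H ∪ edgeNbhd H) ρ}

theorem cylSys_pi (F : Finset HexE) : IsPiSystem (cylSys F) := by
  classical
  rintro _ ⟨H, hH, ρ, rfl⟩ _ ⟨K, hK, ρ', rfl⟩ ⟨ω, h1, h2⟩
  refine ⟨H ∪ K, hH.trans Finset.subset_union_left, ω, ?_⟩
  ext ω'
  constructor
  · rintro ⟨h3, h4⟩ e he
    have : e ∈ (↑H ∪ edgeNbhd H) ∨ e ∈ (↑K ∪ edgeNbhd K) := by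
      rcases he with he | ⟨e', he', he⟩
      · rcases Finset.mem_union.1 he with he | he
        · exact Or.inl (Or.inl he)
        · exact Or.inr (Or.inl he)
      · rcases Finset.mem_union.1 he' with h | h
        · exact Or.inl (Or.inr ⟨e', h, he⟩)
        · exact Or.inr (Or.inr ⟨e', h, he⟩)
    rcases this with h | h
    · rw [h3 e h, h1 e h]
    · rw [h4 e h, h2 e h]
  · intro h
    refine ⟨fun e he => ?_, fun e he => ?_⟩
    · rw [h e (nbhd_mono Finset.subset_union_left he), h1 e he]
    · rw [h e (nbhd_mono Finset.subset_union_right he), h2 e he]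

theorem cylSys_gen (F : Finset HexE) :
    (MeasurableSpace.pi : MeasurableSpace Config) = MeasurableSpace.generateFrom (cylSys F) := by
  classical
  apply le_antisymm
  · refine iSup_le fun e => ?_
    rw [← measurable_iff_comap_le]
    refine @measurable_to_bool _ (MeasurableSpace.generateFrom (cylSys F)) _ ?_
    let G : Set HexE := ↑(insert e F) ∪ edgeNbhd (insert e F)
    have hG : G.Finite := nbhd_finite _
    have : (fun ω : Config => ω e) ⁻¹' {true} = ⋃₀ {s | ∃ σ : Config, σ e = true ∧ s = cyl G σ} := by
      ext ω
      constructor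
      · intro h
        exact ⟨cyl G ω, ⟨ω, h, rfl⟩, fun _ _ => rfl⟩
      · rintro ⟨_, ⟨σ, h, rfl⟩, h1⟩
        have := h1 e (Or.inl (by simp))
        simp [this, h]
    rw [this]
    refine MeasurableSet.sUnion (cyl_countable G hG _) ?_
    rintro _ ⟨σ, _, rfl⟩
    exact MeasurableSpace.measurableSet_generateFrom ⟨insert e F, Finset.subset_insert _ _, σ, rfl⟩
  · apply MeasurableSpace.generateFrom_le
    rintro _ ⟨H, _, ρ, rfl⟩
    exact cyl_meas _ _

theorem isConfig_patch {F : Finset HexE} {ω τ ω' : Config} (hω : IsConfig ω) (hτ : IsConfig τ)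
    (h1 : ∀ e ∉ F, ω' e = ω e) (h2 : ∀ e ∈ (F : Set HexE) ∪ edgeNbhd F, ω' e = τ e) : IsConfig ω' := by
  intro v
  by_cases hv : v ∈ verts F
  · have : localConf ω' v = localConf τ v := by
      funext i; exact h2 _ (Or.inr (edgesAt_mem_nbhd hv i))
    rw [this]; exact hτ v
  · have : localConf ω' v = localConf ω v := by
      funext i; exact h1 _ (fun h => hv (mem_verts_of h))
    rw [this]; exact hω v

theorem weight_pos {a b c : ℝ} (ha : 0 < a) (hb : 0 < b) (hc : 0 < c) {ω : Config}
    (h : IsConfig ω) (v : HexV) : 0 < weight a b c (localConf ω v) := by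
  have h1 := h v
  generalize localConf ω v = f at h1
  have hf : f ≠ (fun _ => false) := by rintro rfl; simp at h1
  have ht : f ≠ (fun _ => true) := by rintro rfl; simp at h1
  unfold weight
  rcases h0 : f 0 <;> rcases h1 : f 1 <;> rcases h2 : f 2 <;> simp only [ha, hb, hc] <;> exfalso
  · apply hf; funext i; fin_cases i <;> simp [h0, h1, h2]
  · apply ht; funext i; fin_cases i <;> simp [h0, h1, h2]

theorem splice_meas (F : Finset HexE) (φ : Config) : Measurable (splice F φ) := by
  refine measurable_pi_lambda _ fun e => ?_
  by_cases h : e ∈ F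
  · simp only [splice, h, if_true]; exact measurable_const
  · simp only [splice, h, if_false]; exact measurable_pi_apply _

theorem meas_isConfig : MeasurableSet {ω | IsConfig ω} := by
  have : {ω : Config | IsConfig ω} = ⋂ v : HexV, (fun ω => localConf ω v) ⁻¹'
     {f | 1 ≤ (Finset.univ.filter fun i : Fin 3 => f i = true).card ∧
    (Finset.univ.filter fun i : Fin 3 => f i = true).card ≤ 2} := by
    ext ω; simp [IsConfig]
  rw [this]
  refine MeasurableSet.iInter fun v => ?_
  have hm : Measurable (fun ω : Config => localConf ω v) :=
    measurable_pi_lambda _ fun i => measurable_pi_apply _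
  exact hm (Set.Finite.measurableSet (Set.toFinite _))

theorem gibbs_null_compl {a b c : ℝ} {μ : Measure Config} (hG : IsGibbs a b c μ) :
    μ {ω | ¬ IsConfig ω} = 0 := by
  have := hG.1
  exact (prob_compl_eq_zero_iff meas_isConfig).2 hG.2.1

theorem gibbs_H {a b c : ℝ} (ha : 0 < a) (hb : 0 < b) (hc : 0 < c) {μ : Measure Config}
    (hG : IsGibbs a b c μ) {F H : Finset HexE} (hFH : F ⊆ H) {σ τ : Config} (hσ : IsConfig σ)
    (hτ : IsConfig τ) (h : ∀ e ∉ F, σ e = τ e) :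
    ENNReal.ofReal (∏ v ∈ verts F, weight a b c (localConf τ v)) * μ (cyl (↑H ∪ edgeNbhd H) σ) =
      ENNReal.ofReal (∏ v ∈ verts F, weight a b c (localConf σ v)) * μ (cyl (↑H ∪ edgeNbhd H) τ) := by
  classical
  have key := hG.2.2 H σ τ hσ hτ (fun e he => h e (fun h' => he (hFH h')))
  have hV : verts F ⊆ verts H := by
    intro v hv
    obtain ⟨e, he, h1⟩ := mem_verts.1 hv
    exact mem_verts.2 ⟨e, hFH he, h1⟩
  have hsplit : ∀ ρ : Config, IsConfig ρ →
      ENNReal.ofReal (∏ v ∈ verts H, weight a b c (localConf ρ v)) =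
      ENNReal.ofReal (∏ v ∈ verts H \ verts F, weight a b c (localConf ρ v)) *
      ENNReal.ofReal (∏ v ∈ verts F, weight a b c (localConf ρ v)) := by
    intro ρ hρ
    rw [← ENNReal.ofReal_mul (Finset.prod_nonneg fun v _ => (weight_pos ha hb hc hρ v).le),
      Finset.prod_sdiff hV]
  rw [hsplit τ hτ, hsplit σ hσ] at key
  have he : ∏ v ∈ verts H \ verts F, weight a b c (localConf τ v) =
      ∏ v ∈ verts H \ verts F, weight a b c (localConf σ v) := by
    refine Finset.prod_congr rfl fun v hv => ?_
    congr 1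
    funext i
    exact (h _ (fun h' => (Finset.mem_sdiff.1 hv).2 (mem_verts_of h'))).symm
  rw [he] at key
  have hpos : 0 < ∏ v ∈ verts H \ verts F, weight a b c (localConf σ v) :=
    Finset.prod_pos fun v _ => weight_pos ha hb hc hσ v
  have h0 : ENNReal.ofReal (∏ v ∈ verts H \ verts F, weight a b c (localConf σ v)) ≠ 0 := by
    simpa using hpos
  rw [← ENNReal.mul_right_inj h0 ENNReal.ofReal_ne_top]
  calc _ = _ := by ring
    _ = _ := key
    _ = _ := by ring

theorem gibbs_splice {a b c : ℝ} (ha : 0 < a) (hb : 0 < b) (hc : 0 < c) {μ : Measure Config}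
    (hG : IsGibbs a b c μ) (F : Finset HexE) (φ σ : Config) (hσ : IsConfig σ)
    (hτ : IsConfig (splice F φ σ)) (T : Set Config) (hT : MeasurableSet T) (hT0 : μ T = 0) :
    μ (splice F φ ⁻¹' T ∩ cyl (↑F ∪ edgeNbhd F) σ) = 0 := by
  classical
  have hprob := hG.1
  set τ := splice F φ σ with hτd
  set G : Set HexE := ↑F ∪ edgeNbhd F with hGd
  set wτ := ENNReal.ofReal (∏ v ∈ verts F, weight a b c (localConf τ v)) with hwτ
  set wσ := ENNReal.ofReal (∏ v ∈ verts F, weight a b c (localConf σ v)) with hwσ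
  have hστ : ∀ e ∉ F, σ e = τ e := fun e he => (splice_not he).symm
  have hms := splice_meas F φ
  let μ₁ := wτ • (μ.restrict (cyl G σ)).map (splice F φ)
  let μ₂ := wσ • μ.restrict (cyl G τ)
  have e1 : ∀ s, MeasurableSet s → μ₁ s = wτ * μ (splice F φ ⁻¹' s ∩ cyl G σ) := by
    intro s hs
    simp only [μ₁, Measure.smul_apply, smul_eq_mul]
    rw [Measure.map_apply hms hs, Measure.restrict_apply (hms hs)]
  have e2 : ∀ s, MeasurableSet s → μ₂ s = wσ * μ (s ∩ cyl G τ) := by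
    intro s hs
    simp only [μ₂, Measure.smul_apply, smul_eq_mul]
    rw [Measure.restrict_apply hs]
  have hfin : IsFiniteMeasure μ₁ := by
    refine ⟨?_⟩
    rw [e1 _ MeasurableSet.univ]
    exact ENNReal.mul_lt_top ENNReal.ofReal_lt_top (measure_lt_top _ _)
  have hnull := gibbs_null_compl hG
  have heq : μ₁ = μ₂ := by
    refine ext_of_generate_finite (cylSys F) (cylSys_gen F) (cylSys_pi F) ?_ ?_
    · rintro s ⟨H, hFH, ρ, rfl⟩
      have hGH : G ⊆ (↑H ∪ edgeNbhd H) := nbhd_mono hFH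
      rw [e1 _ (cyl_meas _ _), e2 _ (cyl_meas _ _)]
      by_cases hex : ∃ ω₀, IsConfig ω₀ ∧ ω₀ ∈ cyl (↑H ∪ edgeNbhd H) ρ ∩ cyl G τ
      · obtain ⟨ω₀, hω₀, h1, h2⟩ := hex
        set ω₁ := splice F σ ω₀ with hω₁d
        have hω₁G : ∀ e ∈ G, ω₁ e = σ e := by
          intro e he
          by_cases heF : e ∈ F
          · exact splice_mem heF
          · rw [hω₁d, splice_not heF, h2 e he, hστ e heF]
        have hω₁ : IsConfig ω₁ := isConfig_patch hω₀ hσ (fun e he => splice_not he) hω₁G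
        have s1 : cyl (↑H ∪ edgeNbhd H) ρ ∩ cyl G τ = cyl (↑H ∪ edgeNbhd H) ω₀ := by
          ext ω
          constructor
          · rintro ⟨h3, _⟩ e he
            rw [h3 e he, h1 e he]
          · intro h3
            exact ⟨fun e he => by rw [h3 e he, h1 e he], fun e he => by rw [h3 e (hGH he), h2 e he]⟩
        have s2 : splice F φ ⁻¹' cyl (↑H ∪ edgeNbhd H) ρ ∩ cyl G σ = cyl (↑H ∪ edgeNbhd H) ω₁ := by
          ext ω
          constructor
          · rintro ⟨h3, h4⟩ e he
            by_cases heF : e ∈ F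
            · rw [h4 e (Or.inl heF), hω₁d, splice_mem heF]
            · have := h3 e he
              rw [splice_not heF] at this
              rw [this, hω₁d, splice_not heF, h1 e he]
          · intro h3
            refine ⟨fun e he => ?_, fun e he => by rw [h3 e (hGH he), hω₁G e he]⟩
            by_cases heF : e ∈ F
            · rw [splice_mem heF, ← h1 e he, h2 e (Or.inl heF), hτd, splice_mem heF]
            · rw [splice_not heF, h3 e he, hω₁d, splice_not heF, h1 e he]
        rw [s1, s2]
        have := gibbs_H ha hb hc hG hFH hω₁ hω₀ (fun e he => splice_not he)
        have w0 : ∏ v ∈ verts F, weight a b c (localConf ω₀ v) =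
            ∏ v ∈ verts F, weight a b c (localConf τ v) := by
          refine Finset.prod_congr rfl fun v hv => ?_
          congr 1; funext i; exact h2 _ (Or.inr (edgesAt_mem_nbhd hv i))
        have w1 : ∏ v ∈ verts F, weight a b c (localConf ω₁ v) =
            ∏ v ∈ verts F, weight a b c (localConf σ v) := by
          refine Finset.prod_congr rfl fun v hv => ?_
          congr 1; funext i; exact hω₁G _ (Or.inr (edgesAt_mem_nbhd hv i))
        rw [w0, w1] at this
        exact this
      · have z2 : μ (cyl (↑H ∪ edgeNbhd H) ρ ∩ cyl G τ) = 0 :=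
          measure_mono_null (fun ω hω hcfg => hex ⟨ω, hcfg, hω⟩) hnull
        have z1 : μ (splice F φ ⁻¹' cyl (↑H ∪ edgeNbhd H) ρ ∩ cyl G σ) = 0 := by
          refine measure_mono_null ?_ hnull
          intro ω hω hcfg
          refine hex ⟨splice F φ ω, ?_, hω.1, ?_⟩
          all_goals
            have hh : ∀ e ∈ G, splice F φ ω e = τ e := by
              intro e he
              by_cases heF : e ∈ F
              · rw [splice_mem heF, hτd, splice_mem heF]
              · rw [splice_not heF, hω.2 e he, hστ e heF]
          · exact isConfig_patch hcfg hτ (fun e he => splice_not he) hh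
          · exact hh
        rw [z1, z2, mul_zero, mul_zero]
    · rw [e1 _ MeasurableSet.univ, e2 _ MeasurableSet.univ]
      simpa using gibbs_H ha hb hc hG (Finset.Subset.refl F) hσ hτ hστ
  have h1 : μ₁ T = 0 := by
    rw [heq, e2 T hT, measure_mono_null Set.inter_subset_left hT0, mul_zero]
  rw [e1 T hT] at h1
  rcases mul_eq_zero.1 h1 with h | h
  · have hpos : 0 < ∏ v ∈ verts F, weight a b c (localConf τ v) :=
      Finset.prod_pos fun v _ => weight_pos ha hb hc hτ v
    rw [hwτ, ENNReal.ofReal_eq_zero] at h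
    exact absurd h (not_le.2 hpos)
  · exact h

theorem fill_null {a b c : ℝ} (ha : 0 < a) (hb : 0 < b) (hc : 0 < c) {μ : Measure Config}
    (hG : IsGibbs a b c μ) (F : Finset HexE) (φ : Config) (T : Set Config) (hT : MeasurableSet T)
    (hT0 : μ T = 0) :
    μ {ω | IsConfig ω ∧ IsConfig (splice F φ ω) ∧ splice F φ ω ∈ T} = 0 := by
  set M := {ω | IsConfig ω ∧ IsConfig (splice F φ ω) ∧ splice F φ ω ∈ T} with hM
  let G : Set HexE := ↑F ∪ edgeNbhd F
  have hcount := cyl_countable G (nbhd_finite F) (fun σ => IsConfig σ ∧ IsConfig (splice F φ σ))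
  have hsub : M ⊆ ⋃ s ∈ {s | ∃ σ, (IsConfig σ ∧ IsConfig (splice F φ σ)) ∧ s = cyl G σ},
      splice F φ ⁻¹' T ∩ s := by
    intro ω hω
    simp only [Set.mem_iUnion]
    exact ⟨cyl G ω, ⟨ω, ⟨hω.1, hω.2.1⟩, rfl⟩, hω.2.2, fun _ _ => rfl⟩
  refine measure_mono_null hsub ((measure_biUnion_null_iff hcount).2 ?_)
  rintro _ ⟨σ, ⟨h1, h2⟩, rfl⟩
  exact gibbs_splice ha hb hc hG F φ σ h1 h2 T hT hT0


theorem mem_confSet {ω : Config} {v : HexV} : v ∈ confSet ω conf001 ↔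
    ω (edgesAt v 0) = true ∧ ω (edgesAt v 1) = false ∧ ω (edgesAt v 2) = false := by
  simp only [confSet, Set.mem_setOf_eq, funext_iff, Fin.forall_fin_succ, localConf, conf001]
  simp

theorem mem_top {ω : Config} {x y : ℤ} : ((x, y, true) : HexV) ∈ confSet ω conf001 ↔
    ω (x, y, 0) = true ∧ ω (x, y, 1) = false ∧ ω (x, y, 2) = false := by
  rw [mem_confSet]; simp [edgesAt]

theorem mem_bot {ω : Config} {x y : ℤ} : ((x, y, false) : HexV) ∈ confSet ω conf001 ↔
    ω (x, y, 0) = true ∧ ω (x - 1, y, 1) = false ∧ ω (x, y - 1, 2) = false := by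
  rw [mem_confSet]; simp [edgesAt]

theorem adjA (x y : ℤ) : HexAdj (x, y, true) (x, y, false) := by rw [hexAdj_iff]; simp
theorem adjB (x y : ℤ) : HexAdj (x, y, true) (x + 1, y, false) := by rw [hexAdj_iff]; simp
theorem adjC (x y : ℤ) : HexAdj (x, y, true) (x, y + 1, false) := by rw [hexAdj_iff]; simp

/-- rectangle -/
def Rc (x₁ x₂ y₁ y₂ : ℤ) : Set HexV := {v | x₁ ≤ v.1 ∧ v.1 ≤ x₂ ∧ y₁ ≤ v.2.1 ∧ v.2.1 ≤ y₂}

/-- rectangle without corner dimers -/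
def Wc (x₁ x₂ y₁ y₂ : ℤ) : Set HexV :=
  {v | (x₁ ≤ v.1 ∧ v.1 ≤ x₂ ∧ y₁ ≤ v.2.1 ∧ v.2.1 ≤ y₂) ∧ ¬ (v.1 = x₁ ∧ v.2.1 = y₁) ∧
    ¬ (v.1 = x₂ ∧ v.2.1 = y₂)}

noncomputable def Fc (x₁ x₂ y₁ y₂ : ℤ) : Finset HexE :=
  (Finset.Icc x₁ x₂ ×ˢ Finset.Icc y₁ y₂ ×ˢ (Finset.univ : Finset (Fin 3))).filter
    (fun e => (e.2.2 = 1 → e.1 + 1 ≤ x₂) ∧ (e.2.2 = 2 → e.2.1 + 1 ≤ y₂))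

theorem mem_Fc0 {x₁ x₂ y₁ y₂ x y : ℤ} : ((x, y, 0) : HexE) ∈ Fc x₁ x₂ y₁ y₂ ↔
    x₁ ≤ x ∧ x ≤ x₂ ∧ y₁ ≤ y ∧ y ≤ y₂ := by
  simp [Fc]; omega
theorem mem_Fc1 {x₁ x₂ y₁ y₂ x y : ℤ} : ((x, y, 1) : HexE) ∈ Fc x₁ x₂ y₁ y₂ ↔
    x₁ ≤ x ∧ x + 1 ≤ x₂ ∧ y₁ ≤ y ∧ y ≤ y₂ := by
  simp [Fc]; omega
theorem mem_Fc2 {x₁ x₂ y₁ y₂ x y : ℤ} : ((x, y, 2) : HexE) ∈ Fc x₁ x₂ y₁ y₂ ↔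
    x₁ ≤ x ∧ x ≤ x₂ ∧ y₁ ≤ y ∧ y + 1 ≤ y₂ := by
  simp [Fc]; omega

def phi : Config := fun e => decide (e.2.2 = 0)

noncomputable def fl (x₁ x₂ y₁ y₂ : ℤ) (ω : Config) : Config := splice (Fc x₁ x₂ y₁ y₂) phi ω

section
variable {x₁ x₂ y₁ y₂ : ℤ} {ω : Config}

theorem fl0 (x y : ℤ) : fl x₁ x₂ y₁ y₂ ω (x, y, 0) =
    if x₁ ≤ x ∧ x ≤ x₂ ∧ y₁ ≤ y ∧ y ≤ y₂ then true else ω (x, y, 0) := by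
  simp [fl, splice, mem_Fc0, phi]
theorem fl1 (x y : ℤ) : fl x₁ x₂ y₁ y₂ ω (x, y, 1) =
    if x₁ ≤ x ∧ x + 1 ≤ x₂ ∧ y₁ ≤ y ∧ y ≤ y₂ then false else ω (x, y, 1) := by
  simp [fl, splice, mem_Fc1, phi]
theorem fl2 (x y : ℤ) : fl x₁ x₂ y₁ y₂ ω (x, y, 2) =
    if x₁ ≤ x ∧ x ≤ x₂ ∧ y₁ ≤ y ∧ y + 1 ≤ y₂ then false else ω (x, y, 2) := by
  simp [fl, splice, mem_Fc2, phi]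

theorem localConf_out {v : HexV} (hv : v ∉ Rc x₁ x₂ y₁ y₂) :
    localConf (fl x₁ x₂ y₁ y₂ ω) v = localConf ω v := by
  obtain ⟨x, y, t⟩ := v
  simp only [Rc, Set.mem_setOf_eq] at hv
  funext i
  cases t <;> fin_cases i <;> simp only [localConf, edgesAt] <;> simp [fl0, fl1, fl2] <;> intros <;> omega

theorem isConfig_at {f : Fin 3 → Bool} :
    (1 ≤ (Finset.univ.filter fun i : Fin 3 => f i = true).card ∧
    (Finset.univ.filter fun i : Fin 3 => f i = true).card ≤ 2) ↔
    (∃ i, f i = true) ∧ ∃ i, f i = false := by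
  revert f; decide

theorem fl_config (hω : IsConfig ω) (h1 : ω (x₁, y₁, 0) = true) (h2 : ω (x₂, y₂, 0) = true) :
    IsConfig (fl x₁ x₂ y₁ y₂ ω) := by
  intro v
  by_cases hv : v ∈ Rc x₁ x₂ y₁ y₂
  · rw [isConfig_at]
    have hold := isConfig_at.1 (hω v)
    obtain ⟨x, y, t⟩ := v
    simp only [Rc, Set.mem_setOf_eq] at hv
    refine ⟨⟨0, ?_⟩, ?_⟩
    · cases t <;> simp [localConf, edgesAt, fl0] <;> intros <;> omega
    · obtain ⟨_, i, hi⟩ := hold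
      cases t
      · by_cases hx : x₁ < x
        · refine ⟨1, ?_⟩
          simp [localConf, edgesAt, fl1]; intros; omega
        · by_cases hy : y₁ < y
          · refine ⟨2, ?_⟩
            simp [localConf, edgesAt, fl2]; intros; omega
          · obtain rfl : x = x₁ := by omega
            obtain rfl : y = y₁ := by omega
            refine ⟨i, ?_⟩
            fin_cases i
            · simp [localConf, edgesAt, h1] at hi
            · simp [localConf, edgesAt, fl1] at hi ⊢; exact hi
            · simp [localConf, edgesAt, fl2] at hi ⊢; exact hi
      · by_cases hx : x < x₂
        · refine ⟨1, ?_⟩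
          simp [localConf, edgesAt, fl1]; intros; omega
        · by_cases hy : y < y₂
          · refine ⟨2, ?_⟩
            simp [localConf, edgesAt, fl2]; intros; omega
          · obtain rfl : x = x₂ := by omega
            obtain rfl : y = y₂ := by omega
            refine ⟨i, ?_⟩
            fin_cases i
            · simp [localConf, edgesAt, h2] at hi
            · simp [localConf, edgesAt, fl1] at hi ⊢; exact hi
            · simp [localConf, edgesAt, fl2] at hi ⊢; exact hi
  · rw [localConf_out hv]; exact hω v

theorem fl_out {v : HexV} (hv : v ∉ Rc x₁ x₂ y₁ y₂) :
    v ∈ confSet (fl x₁ x₂ y₁ y₂ ω) conf001 ↔ v ∈ confSet ω conf001 := by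
  simp only [confSet, Set.mem_setOf_eq, localConf_out hv]

theorem fl_top {x y : ℤ} (h : x₁ ≤ x ∧ x ≤ x₂ ∧ y₁ ≤ y ∧ y ≤ y₂)
    (hx : x < x₂ ∨ ω (x, y, 1) = false) (hy : y < y₂ ∨ ω (x, y, 2) = false) :
    ((x, y, true) : HexV) ∈ confSet (fl x₁ x₂ y₁ y₂ ω) conf001 := by
  rw [mem_top, fl0, fl1, fl2]
  refine ⟨by simp [h], ?_, ?_⟩
  · rcases hx with hx | hx
    · rw [if_pos (by omega)]
    · simp [hx]
  · rcases hy with hx | hx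
    · rw [if_pos (by omega)]
    · simp [hx]

theorem fl_bot {x y : ℤ} (h : x₁ ≤ x ∧ x ≤ x₂ ∧ y₁ ≤ y ∧ y ≤ y₂)
    (hx : x₁ < x ∨ ω (x - 1, y, 1) = false) (hy : y₁ < y ∨ ω (x, y - 1, 2) = false) :
    ((x, y, false) : HexV) ∈ confSet (fl x₁ x₂ y₁ y₂ ω) conf001 := by
  rw [mem_bot, fl0, fl1, fl2]
  refine ⟨by simp [h], ?_, ?_⟩
  · rcases hx with hx | hx
    · rw [if_pos (by omega)]
    · simp [hx]
  · rcases hy with hx | hx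
    · rw [if_pos (by omega)]
    · simp [hx]

theorem fl_conn (hx : x₁ + 3 ≤ x₂) (hy : y₁ + 3 ≤ y₂) :
    ∀ u ∈ Wc x₁ x₂ y₁ y₂ ∩ confSet (fl x₁ x₂ y₁ y₂ ω) conf001,
      ∀ v ∈ Wc x₁ x₂ y₁ y₂ ∩ confSet (fl x₁ x₂ y₁ y₂ ω) conf001,
      Conn (Wc x₁ x₂ y₁ y₂ ∩ confSet (fl x₁ x₂ y₁ y₂ ω) conf001) u v := by
  set Q := Wc x₁ x₂ y₁ y₂ ∩ confSet (fl x₁ x₂ y₁ y₂ ω) conf001 with hQ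
  have topok : ∀ x y : ℤ, x₁ ≤ x → x < x₂ → y₁ ≤ y → y < y₂ → ¬ (x = x₁ ∧ y = y₁) →
      ((x, y, true) : HexV) ∈ Q := by
    intro x y h1 h2 h3 h4 h5
    refine ⟨⟨⟨h1, h2.le, h3, h4.le⟩, h5, fun h => ?_⟩, fl_top (by omega) (Or.inl h2) (Or.inl h4)⟩
    simp only at h; omega
  have botok : ∀ x y : ℤ, x₁ < x → x ≤ x₂ → y₁ < y → y ≤ y₂ → ¬ (x = x₂ ∧ y = y₂) →
      ((x, y, false) : HexV) ∈ Q := by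
    intro x y h1 h2 h3 h4 h5
    refine ⟨⟨⟨h1.le, h2, h3.le, h4⟩, fun h => ?_, h5⟩, fl_bot (by omega) (Or.inl h1) (Or.inl h3)⟩
    simp only at h; omega
  let hub : HexV := (x₂ - 1, y₂ - 1, true)
  have row : ∀ n : ℕ, ∀ x y : ℤ, x₁ < x → x + n = x₂ - 1 → y₁ < y → y < y₂ →
      Conn Q (x, y, true) (x₂ - 1, y, true) := by
    intro n
    induction n with
    | zero =>
      intro x y h1 h2 h3 h4
      obtain rfl : x = x₂ - 1 := by simpa using h2
      exact Relation.ReflTransGen.refl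
    | succ n ih =>
      intro x y h1 h2 h3 h4
      push_cast at h2
      have b := botok (x + 1) y (by omega) (by omega) (by omega) (by omega) (by omega)
      have t := topok x y (by omega) (by omega) (by omega) (by omega) (by omega)
      have t' := topok (x+1) y (by omega) (by omega) (by omega) (by omega) (by omega)
      exact ((Conn.single (adjB x y) t b).trans (Conn.single (adjA (x+1) y).symm' b t')).trans
        (ih (x+1) y (by omega) (by omega) h3 h4)
  have col : ∀ n : ℕ, ∀ y : ℤ, y₁ < y → y + n = y₂ - 1 → Conn Q (x₂ - 1, y, true) hub := by
    intro n
    induction n with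
    | zero =>
      intro y h1 h2
      obtain rfl : y = y₂ - 1 := by simpa using h2
      exact Relation.ReflTransGen.refl
    | succ n ih =>
      intro y h1 h2
      push_cast at h2
      have b := botok (x₂ - 1) (y+1) (by omega) (by omega) (by omega) (by omega) (by omega)
      have t := topok (x₂ - 1) y (by omega) (by omega) (by omega) (by omega) (by omega)
      have t' := topok (x₂ - 1) (y+1) (by omega) (by omega) (by omega) (by omega) (by omega)
      exact ((Conn.single (adjC (x₂ - 1) y) t b).trans
        (Conn.single (adjA (x₂ - 1) (y+1)).symm' b t')).trans (ih (y+1) (by omega) (by omega))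
  have topint : ∀ x y : ℤ, x₁ < x → x < x₂ → y₁ < y → y < y₂ → Conn Q (x, y, true) hub := by
    intro x y h1 h2 h3 h4
    exact (row (x₂ - 1 - x).toNat x y h1 (by omega) h3 h4).trans
      (col (y₂ - 1 - y).toNat y h3 (by omega))
  have bot1 : ∀ x y : ℤ, x₁ < x → x ≤ x₂ → y₁ < y → y ≤ y₂ → ¬ (x = x₂ ∧ y = y₂) →
      Conn Q (x, y, false) hub := by
    intro x y h1 h2 h3 h4 h5
    have b := botok x y h1 h2 h3 h4 h5
    by_cases c1 : x < x₂
    · by_cases c2 : y < y₂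
      · have t := topok x y (by omega) (by omega) (by omega) (by omega) (by omega)
        exact (Conn.single (adjA x y).symm' b t).trans (topint x y h1 c1 h3 c2)
      · have t := topok x (y-1) (by omega) (by omega) (by omega) (by omega) (by omega)
        have ad := (adjC x (y-1)).symm'
        rw [sub_add_cancel] at ad
        exact (Conn.single ad b t).trans (topint x (y-1) h1 c1 (by omega) (by omega))
    · have t := topok (x-1) y (by omega) (by omega) (by omega) (by omega) (by omega)
      have ad := (adjB (x-1) y).symm'
      rw [sub_add_cancel] at ad
      exact (Conn.single ad b t).trans (topint (x-1) y (by omega) (by omega) (by omega) (by omega))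
  have topall : ∀ x y : ℤ, ((x, y, true) : HexV) ∈ Q → Conn Q (x, y, true) hub := by
    intro x y h
    obtain ⟨⟨h1, h2, h3⟩, -⟩ := id h
    simp only at h1 h2 h3
    by_cases c1 : x₁ < x
    · by_cases c2 : y₁ < y
      · exact (Conn.single (adjA x y) h (botok x y (by omega) (by omega) (by omega) (by omega) (by omega))).trans
          (bot1 x y (by omega) (by omega) (by omega) (by omega) (by omega))
      · exact (Conn.single (adjC x y) h (botok x (y+1) (by omega) (by omega) (by omega) (by omega) (by omega))).trans
          (bot1 x (y+1) (by omega) (by omega) (by omega) (by omega) (by omega))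
    · exact (Conn.single (adjB x y) h (botok (x+1) y (by omega) (by omega) (by omega) (by omega) (by omega))).trans
          (bot1 (x+1) y (by omega) (by omega) (by omega) (by omega) (by omega))
  have botall : ∀ x y : ℤ, ((x, y, false) : HexV) ∈ Q → Conn Q (x, y, false) hub := by
    intro x y h
    obtain ⟨⟨h1, h2, h3⟩, -⟩ := id h
    simp only at h1 h2 h3
    by_cases c1 : x < x₂
    · by_cases c2 : y < y₂
      · have t := topok x y (by omega) (by omega) (by omega) (by omega) (by omega)
        exact (Conn.single (adjA x y).symm' h t).trans (topall _ _ t)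
      · have t := topok x (y-1) (by omega) (by omega) (by omega) (by omega) (by omega)
        have ad := (adjC x (y-1)).symm'
        rw [sub_add_cancel] at ad
        exact (Conn.single ad h t).trans (topall _ _ t)
    · have t := topok (x-1) y (by omega) (by omega) (by omega) (by omega) (by omega)
      have ad := (adjB (x-1) y).symm'
      rw [sub_add_cancel] at ad
      exact (Conn.single ad h t).trans (topall _ _ t)
  have all : ∀ u ∈ Q, Conn Q u hub := by
    rintro ⟨x, y, t⟩ h
    cases t
    · exact botall x y h
    · exact topall x y h
  intro u hu v hv
  exact (all u hu).trans (Conn.symm (all v hv))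

def Sp (x₁ x₂ y₁ y₂ : ℤ) : Finset HexV :=
  {(x₁ - 1, y₁, true), (x₁, y₁ - 1, true), (x₂ + 1, y₂, false), (x₂, y₂ + 1, false)}

theorem attach (hx : x₁ + 3 ≤ x₂) (hy : y₁ + 3 ≤ y₂) {u v : HexV} (hu : u ∈ confSet ω conf001)
    (huR : u ∉ Rc x₁ x₂ y₁ y₂) (hv : v ∈ Rc x₁ x₂ y₁ y₂) (hadj : HexAdj u v)
    (hsp : u ∉ Sp x₁ x₂ y₁ y₂) :
    v ∈ Wc x₁ x₂ y₁ y₂ ∩ confSet (fl x₁ x₂ y₁ y₂ ω) conf001 := by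
  obtain ⟨ux, uy, ut⟩ := u
  obtain ⟨x, y, t⟩ := v
  rw [hexAdj_iff] at hadj
  simp only [Rc, Set.mem_setOf_eq, Sp, Finset.mem_insert, Finset.mem_singleton, Prod.mk.injEq] at *
  rcases hadj with ⟨rfl, rfl, h⟩ | ⟨rfl, rfl, h⟩
  · have hu' := mem_top.1 hu
    simp only [and_true, and_false, or_false, reduceCtorEq] at hsp
    rcases h with ⟨rfl, rfl⟩ | ⟨rfl, rfl⟩ | ⟨rfl, rfl⟩
    · exact absurd hv huR
    · refine ⟨⟨hv, ?_, ?_⟩, fl_bot hv (Or.inr ?_) (Or.inl ?_)⟩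
      · simp only; omega
      · simp only; omega
      · simpa using hu'.2.1
      · omega
    · refine ⟨⟨hv, ?_, ?_⟩, fl_bot hv (Or.inl ?_) (Or.inr ?_)⟩
      · simp only; omega
      · simp only; omega
      · omega
      · simpa using hu'.2.2
  · have hu' := mem_bot.1 hu
    simp only [and_true, and_false, false_or, reduceCtorEq] at hsp
    rcases h with ⟨rfl, rfl⟩ | ⟨rfl, rfl⟩ | ⟨rfl, rfl⟩
    · exact absurd hv huR
    · refine ⟨⟨hv, ?_, ?_⟩, fl_top hv (Or.inr ?_) (Or.inl ?_)⟩
      · simp only; omega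
      · simp only; omega
      · simpa using hu'.2.1
      · omega
    · refine ⟨⟨hv, ?_, ?_⟩, fl_top hv (Or.inl ?_) (Or.inr ?_)⟩
      · simp only; omega
      · simp only; omega
      · omega
      · simpa using hu'.2.2

theorem corner_adj (hx : x₁ + 3 ≤ x₂) (hy : y₁ + 3 ≤ y₂) {u v : HexV}
    (huR : u ∉ Rc x₁ x₂ y₁ y₂) (hv : v ∈ Rc x₁ x₂ y₁ y₂) (hvW : v ∉ Wc x₁ x₂ y₁ y₂)
    (hadj : HexAdj u v) : u ∈ Sp x₁ x₂ y₁ y₂ := by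
  obtain ⟨ux, uy, ut⟩ := u
  obtain ⟨x, y, t⟩ := v
  rw [hexAdj_iff] at hadj
  simp only [Rc, Wc, Set.mem_setOf_eq, Sp, Finset.mem_insert, Finset.mem_singleton, Prod.mk.injEq] at *
  rcases hadj with ⟨rfl, rfl, h⟩ | ⟨rfl, rfl, h⟩
  · simp only [and_true, and_false, or_false, reduceCtorEq]
    omega
  · simp only [and_true, and_false, false_or, reduceCtorEq]
    omega

theorem Rc_finite : (Rc x₁ x₂ y₁ y₂).Finite := by
  refine Set.Finite.subset ((Finset.Icc x₁ x₂ ×ˢ Finset.Icc y₁ y₂ ×ˢ (Finset.univ : Finset Bool)).finite_toSet) ?_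
  rintro ⟨x, y, t⟩ h
  simp only [Rc, Set.mem_setOf_eq] at h
  simp; omega

theorem exists_branch {S : Set HexV} {v : HexV} (hv : v ∈ Rc x₁ x₂ y₁ y₂) (hvS : v ∈ S)
    (hinf : (compOf S v).Infinite) :
    ∃ u, u ∈ S ∧ u ∉ Rc x₁ x₂ y₁ y₂ ∧ Conn S v u ∧ (∃ r ∈ Rc x₁ x₂ y₁ y₂, HexAdj u r) ∧
      (compOf (S \ Rc x₁ x₂ y₁ y₂) u).Infinite := by
  by_contra hno
  push Not at hno
  let U : Set HexV := {u | u ∈ S ∧ u ∉ Rc x₁ x₂ y₁ y₂ ∧ Conn S v u ∧ ∃ r ∈ Rc x₁ x₂ y₁ y₂, HexAdj u r}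
  have hU : U.Finite := by
    refine (Rc_finite (x₁ := x₁ - 1) (x₂ := x₂ + 1) (y₁ := y₁ - 1) (y₂ := y₂ + 1)).subset ?_
    rintro u ⟨_, _, _, r, hr, h⟩
    have := (hexAdj_iff _ _).1 h
    simp only [Rc, Set.mem_setOf_eq] at *
    omega
  apply hinf
  refine ((Rc_finite (x₁ := x₁) (x₂ := x₂) (y₁ := y₁) (y₂ := y₂)).union
    (hU.biUnion (t := fun u => compOf (S \ Rc x₁ x₂ y₁ y₂) u) fun u hu => ?_)).subset ?_
  · obtain ⟨h1, h2, h3, r, hr, h4⟩ := hu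
    exact hno u h1 h2 h3 ⟨r, hr, h4⟩
  · intro w hw
    by_cases hwR : w ∈ Rc x₁ x₂ y₁ y₂
    · exact Or.inl hwR
    · right
      obtain ⟨x, y, h1, h2, h3, h4⟩ := rtg_exit (fun z => z ∉ Rc x₁ x₂ y₁ y₂) (Conn.symm hw) hwR (not_not.2 hv)
      have h1' : Conn (S \ Rc x₁ x₂ y₁ y₂) w x := by
        refine Relation.ReflTransGen.mono ?_ _ _ h1
        intro p q h
        exact ⟨h.1.1, And.intro h.1.2.1 h.2.1, And.intro h.1.2.2 h.2.2⟩
      simp only [Set.mem_iUnion]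
      exact ⟨x, ⟨h3.2.1, h2, Relation.ReflTransGen.trans hw (Conn.mono Set.sdiff_subset h1'), y, not_not.1 h4, h3.1⟩, Conn.symm h1'⟩

theorem fill_trif (hx : x₁ + 3 ≤ x₂) (hy : y₁ + 3 ≤ y₂) (v : Fin 3 → HexV)
    (hvR : ∀ k, v k ∈ Rc x₁ x₂ y₁ y₂) (hvS : ∀ k, v k ∈ confSet ω conf001)
    (hinf : ∀ k, (compOf (confSet ω conf001) (v k)).Infinite)
    (hdis : ∀ k l, k ≠ l → ¬ Conn (confSet ω conf001) (v k) (v l))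
    (hsp : ∀ k, ∀ s ∈ Sp x₁ x₂ y₁ y₂, ¬ Conn (confSet ω conf001) (v k) s) :
    Trif (confSet (fl x₁ x₂ y₁ y₂ ω) conf001) (Wc x₁ x₂ y₁ y₂) := by
  refine ⟨fl_conn hx hy, ?_⟩
  choose u hu1 hu2 hu3 hu4 hu5 using fun k => exists_branch (hvR k) (hvS k) (hinf k)
  have hWR : Wc x₁ x₂ y₁ y₂ ⊆ Rc x₁ x₂ y₁ y₂ := fun z hz => hz.1
  have hsub : confSet ω conf001 \ Rc x₁ x₂ y₁ y₂ ⊆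
      confSet (fl x₁ x₂ y₁ y₂ ω) conf001 \ Wc x₁ x₂ y₁ y₂ :=
    fun z hz => ⟨(fl_out hz.2).2 hz.1, fun h => hz.2 (hWR h)⟩
  refine ⟨u, fun k => ⟨hsub ⟨hu1 k, hu2 k⟩, ?_, ?_⟩, ?_⟩
  · obtain ⟨r, hr, h⟩ := hu4 k
    exact ⟨r, attach hx hy (hu1 k) (hu2 k) hr h (fun hs => hsp k _ hs (hu3 k)), h⟩
  · exact (hu5 k).mono fun z hz => Conn.mono hsub hz
  · intro k l hkl hc
    have inv : ∀ z, Conn (confSet (fl x₁ x₂ y₁ y₂ ω) conf001 \ Wc x₁ x₂ y₁ y₂) (u k) z →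
        z ∉ Rc x₁ x₂ y₁ y₂ ∧ Conn (confSet ω conf001) (v k) z := by
      intro z hz
      induction hz with
      | refl => exact ⟨hu2 k, hu3 k⟩
      | tail _ h2 ih =>
        rename_i b z' _
        obtain ⟨hb1, hb2⟩ := ih
        have hz' : z' ∉ Rc x₁ x₂ y₁ y₂ := fun hz' =>
          hsp k _ (corner_adj hx hy hb1 hz' h2.2.2.2 h2.1) hb2
        exact ⟨hz', hb2.tail ⟨h2.1, Conn.mem hb2 (hvS k), (fl_out hz').1 h2.2.2.1⟩⟩
    exact hdis k l hkl ((inv _ hc).2.trans (Conn.symm (hu3 l)))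

end


def Qd (s : ℤ) (p : ℤ × ℤ) : Set Config := {ω | ∀ i j : ℕ, ω (p.1 + s * i, p.2 + s * j, 0) = false}

def Qall : Set Config := {ω | ∀ x y : ℤ, ω (x, y, 0) = false}

theorem meas_Qd (s : ℤ) (p : ℤ × ℤ) : MeasurableSet (Qd s p) := by
  have : Qd s p = ⋂ i : ℕ, ⋂ j : ℕ,
      (fun ω : Config => ω (p.1 + s * i, p.2 + s * j, 0)) ⁻¹' {false} := by
    ext ω; simp [Qd]
  rw [this]
  exact MeasurableSet.iInter fun i => MeasurableSet.iInter fun j =>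
    (measurable_pi_apply _) (MeasurableSet.singleton _)

theorem meas_Qall : MeasurableSet Qall := by
  have : Qall = ⋂ i : ℤ, ⋂ j : ℤ, (fun ω : Config => ω (i, j, 0)) ⁻¹' {false} := by
    ext ω; simp [Qall]
  rw [this]
  exact MeasurableSet.iInter fun i => MeasurableSet.iInter fun j =>
    (measurable_pi_apply _) (MeasurableSet.singleton _)

theorem Qd_shift (s : ℤ) (p : ℤ × ℤ) : Qd s p = shiftConfig p ⁻¹' Qd s 0 := by
  ext ω
  simp [Qd, shiftConfig, shiftE, add_comm]

theorem Qd_meas_eq {μ : Measure Config} (hTI : TransInvariant μ) (s : ℤ) (p : ℤ × ℤ) :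
    μ (Qd s p) = μ (Qd s 0) := by
  conv_rhs => rw [← hTI p, Measure.map_apply (meas_shift p) (meas_Qd s 0)]
  rw [← Qd_shift]

theorem Qd_null {μ : Measure Config} [IsProbabilityMeasure μ] (hTI : TransInvariant μ) (s : ℤ)
    (hs : s = 1 ∨ s = -1) (p : ℤ × ℤ) : μ (Qd s p \ Qall) = 0 := by
  let f : ℕ → Set Config := fun k => Qd s (- s * k, - s * k)
  have hanti : Antitone f := by
    apply antitone_nat_of_succ_le
    intro k ω hω i j
    have := hω (i+1) (j+1)
    simp only at this ⊢
    rw [← this]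
    push_cast
    congr 2 <;> [skip; congr 1] <;> ring
  have hInter : ⋂ k, f k = Qall := by
    ext ω
    simp only [Set.mem_iInter]
    constructor
    · intro h x y
      have := h (x.natAbs + y.natAbs) (s * x + (x.natAbs + y.natAbs : ℕ)).toNat
        (s * y + (x.natAbs + y.natAbs : ℕ)).toNat
      simp only at this
      rw [← this]
      rcases hs with rfl | rfl
      · congr 2 <;> [skip; congr 1] <;> omega
      · congr 2 <;> [skip; congr 1] <;> omega
    · intro h k i j
      exact h _ _
  have ht := tendsto_measure_iInter_atTop (μ := μ) (s := f)
    (fun k => (meas_Qd _ _).nullMeasurableSet) hanti ⟨0, measure_ne_top _ _⟩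
  rw [hInter] at ht
  have hconst : (μ ∘ f) = fun _ => μ (Qd s 0) := by
    funext k; exact Qd_meas_eq hTI s _
  rw [hconst] at ht
  have heq := tendsto_nhds_unique ht tendsto_const_nhds
  have hsub : Qall ⊆ Qd s p := fun ω h i j => h _ _
  rw [measure_sdiff hsub meas_Qall.nullMeasurableSet (measure_ne_top _ _), heq,
    Qd_meas_eq hTI s p, tsub_self]

theorem pick {ω : Config} (hω : IsConfig ω) (hN : numInfClusters ω conf001 = ⊤)
    (h1 : ∀ p, ω ∉ Qd 1 p \ Qall) (h2 : ∀ p, ω ∉ Qd (-1) p \ Qall) :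
    ∃ x₁ x₂ y₁ y₂ : ℤ, IsConfig (fl x₁ x₂ y₁ y₂ ω) ∧
      Trif (confSet (fl x₁ x₂ y₁ y₂ ω) conf001) (Wc x₁ x₂ y₁ y₂) := by
  classical
  set S := confSet ω conf001 with hS
  have hinf : {C : Set HexV | IsCluster ω conf001 C ∧ C.Infinite}.Infinite :=
    Set.encard_eq_top_iff.1 hN
  obtain ⟨t, ht, htc⟩ := hinf.exists_subset_card_eq 7
  have hrep : ∀ C : t, ∃ v ∈ S, C.1 = compOf S v := fun C => (ht C.2).1
  choose r hrS hrC using hrep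
  have hne : Nonempty t := by
    have : t.Nonempty := by rw [← Finset.card_pos]; omega
    exact this.to_subtype
  have hall : ω ∉ Qall := by
    obtain ⟨C⟩ := hne
    intro h
    have h0 := (mem_confSet.1 (hrS C)).1
    have : edgesAt (r C) 0 = ((r C).1, (r C).2.1, 0) := by
      simp [edgesAt]
    rw [this, h] at h0
    cases h0
  obtain ⟨n, hn⟩ : ∃ n : ℕ, ∀ C : t, r C ∈ bx n := by
    let g : t → ℕ := fun C => (r C).1.natAbs + (r C).2.1.natAbs
    refine ⟨∑ C, g C, fun C => ?_⟩
    have : g C ≤ ∑ C, g C := Finset.single_le_sum (fun _ _ => Nat.zero_le _) (Finset.mem_univ C)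
    rw [mem_bx]
    simp only [g] at this ⊢
    omega
  have e1 : ∃ i j : ℕ, ω ((n:ℤ) + 2 + 1 * i, (n:ℤ) + 2 + 1 * j, 0) = true := by
    by_contra hcon
    push Not at hcon
    exact h1 (n + 2, n + 2) ⟨fun i j => by simpa using hcon i j, hall⟩
  have e2 : ∃ i j : ℕ, ω (-(n:ℤ) - 2 + -1 * i, -(n:ℤ) - 2 + -1 * j, 0) = true := by
    by_contra hcon
    push Not at hcon
    exact h2 (-n - 2, -n - 2) ⟨fun i j => by simpa using hcon i j, hall⟩
  obtain ⟨i, j, e1⟩ := e1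
  obtain ⟨i', j', e2⟩ := e2
  generalize hx2 : (n:ℤ) + 2 + 1 * i = x₂ at e1
  generalize hy2 : (n:ℤ) + 2 + 1 * j = y₂ at e1
  generalize hx1 : -(n:ℤ) - 2 + -1 * i' = x₁ at e2
  generalize hy1 : -(n:ℤ) - 2 + -1 * j' = y₁ at e2
  refine ⟨x₁, x₂, y₁, y₂, fl_config hω e2 e1, ?_⟩
  -- distinct clusters
  have hdist : ∀ C D : t, Conn S (r C) (r D) → C = D := by
    intro C D h
    apply Subtype.ext
    rw [hrC C, hrC D]
    ext z
    exact ⟨fun hz => (Conn.symm h).trans hz, fun hz => h.trans hz⟩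
  let bad : Finset t := Finset.univ.filter fun C => ∃ s ∈ Sp x₁ x₂ y₁ y₂, Conn S (r C) s
  have hbad : bad.card ≤ 4 := by
    have hSp : (Sp x₁ x₂ y₁ y₂).card ≤ 4 := Finset.card_le_four
    refine le_trans ?_ hSp
    refine Finset.card_le_card_of_forall_subsingleton (fun C s => Conn S (r C) s) ?_ ?_
    · intro C hC
      exact (Finset.mem_filter.1 hC).2
    · intro s _ C hC D hD
      exact hdist C D (hC.2.trans (Conn.symm hD.2))
  have hgood : 3 ≤ (Finset.univ \ bad).card := by
    have h := Finset.le_card_sdiff bad (Finset.univ : Finset t)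
    have h7 : (Finset.univ : Finset t).card = 7 := by
      rw [Finset.card_univ, Fintype.card_coe, htc]
    omega
  obtain ⟨q, hq, hqc⟩ := Finset.exists_subset_card_eq hgood
  let e := (Finset.equivFinOfCardEq hqc).symm
  refine fill_trif (by omega) (by omega) (fun k => r (e k).1) ?_ (fun k => hrS _) ?_ ?_ ?_
  · intro k
    have := mem_bx.1 (hn (e k).1)
    refine ⟨?_, ?_, ?_, ?_⟩ <;> omega
  · intro k
    have := (ht (e k).1.2).2
    rw [hrC] at this
    exact this
  · intro k l hkl h
    exact hkl (e.injective (Subtype.ext (hdist _ _ h)))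
  · intro k s hs h
    have := hq (e k).2
    exact (Finset.mem_sdiff.1 this).2 (Finset.mem_filter.2 ⟨Finset.mem_univ _, s, hs, h⟩)

theorem main_null
    (a b c : ℝ) (ha : 0 < a) (hb : 0 < b) (hc : 0 < c)
    (μ : Measure Config) (hGibbs : IsGibbs a b c μ) (hTI : TransInvariant μ) :
    μ {ω : Config | numInfClusters ω conf001 = ⊤} = 0 := by
  have := hGibbs.1
  have hnull : ∀ q : ℤ × ℤ × ℤ × ℤ,
      μ {ω | IsConfig ω ∧ IsConfig (splice (Fc q.1 q.2.1 q.2.2.1 q.2.2.2) phi ω) ∧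
        splice (Fc q.1 q.2.1 q.2.2.1 q.2.2.2) phi ω ∈
          {ω | Trif (confSet ω conf001) (Wc q.1 q.2.1 q.2.2.1 q.2.2.2)}} = 0 := by
    rintro ⟨x₁, x₂, y₁, y₂⟩
    refine fill_null ha hb hc hGibbs _ _ _ (measurableSet_setOfPred.2 (meas_trif _)) ?_
    refine trif_null μ hTI _ (x₁.natAbs + x₂.natAbs + y₁.natAbs + y₂.natAbs) ?_
    intro v hv
    have := hv.1
    rw [mem_bx]
    simp only at this
    omega
  have hbig : μ ({ω | ¬ IsConfig ω} ∪ (⋃ p, (Qd 1 p \ Qall)) ∪ (⋃ p, (Qd (-1) p \ Qall)) ∪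
      ⋃ q : ℤ × ℤ × ℤ × ℤ,
        {ω | IsConfig ω ∧ IsConfig (splice (Fc q.1 q.2.1 q.2.2.1 q.2.2.2) phi ω) ∧
        splice (Fc q.1 q.2.1 q.2.2.1 q.2.2.2) phi ω ∈
          {ω | Trif (confSet ω conf001) (Wc q.1 q.2.1 q.2.2.1 q.2.2.2)}}) = 0 :=
    measure_union_null (measure_union_null (measure_union_null (gibbs_null_compl hGibbs)
      (measure_iUnion_null fun p => Qd_null hTI 1 (Or.inl rfl) p))
      (measure_iUnion_null fun p => Qd_null hTI (-1) (Or.inr rfl) p))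
      (measure_iUnion_null hnull)
  refine measure_mono_null ?_ hbig
  intro ω hN
  by_contra hcon
  simp only [Set.mem_union, not_or, Set.mem_iUnion, not_exists] at hcon
  obtain ⟨⟨⟨h0, h1⟩, h2⟩, h3⟩ := hcon
  have hω : IsConfig ω := not_not.1 h0
  obtain ⟨x₁, x₂, y₁, y₂, hf, ht⟩ := pick hω hN h1 h2
  exact h3 (x₁, x₂, y₁, y₂) ⟨hω, hf, ht⟩

/-- for an ergodic translation-invariant Gibbs measure, almost surely the number
of infinite `{001}`-clusters is not infinite. -/
theorem no_infinitely_many_infinite_001_clusters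
    (a b c : ℝ) (ha : 0 < a) (hb : 0 < b) (hc : 0 < c)
    (μ : Measure Config) (hGibbs : IsGibbs a b c μ) (hTI : TransInvariant μ)
    (hErg : IsErgodicTI μ) :
    μ {ω : Config | numInfClusters ω conf001 = ⊤} = 0 :=
  main_null a b c ha hb hc μ hGibbs hTI
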